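/- arXiv:2601.07817 — 2 statements merged into one kernel-verified Lean document; each statement's English description precedes it below -/
import Mathlib

section
/- For every fixed ε > 0 there is a constant C(ε) such that for all nonzero integers a, b, c and all real B ≥ 2, the number ρ(B; a, b, c) of integer solutions (x, y, z) of a x³ + b y³ + c z³ = 0 with gcd(x, y, z) = 1 and max(|x|, |y|, |z|) ≤ B satisfies ρ(B; a, b, c) ≤ C(ε) · B^ε; in particular the bound is uniform in a, b, c. -/
namespace DCubic
open WeierstrassCurve

section Curve
set_option linter.unusedSectionVars false
variable {F : Type*} [Field F] [DecidableEq F]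

/-- The curve `Y² + mY = X³`. -/
def Wc (m : F) : WeierstrassCurve.Affine F :=
  { a₁ := 0, a₂ := 0, a₃ := m, a₄ := 0, a₆ := 0 }

lemma ns_iff [CharZero F] {m : F} (hm : m ≠ 0) (x y : F) :
    (Wc m).Nonsingular x y ↔ y ^ 2 + m * y = x ^ 3 := by
  have : (Wc m).IsElliptic := by
    constructor
    simp [Wc, WeierstrassCurve.Δ, WeierstrassCurve.b₂, WeierstrassCurve.b₄, WeierstrassCurve.b₆,
      WeierstrassCurve.b₈, hm]
  rw [← WeierstrassCurve.Affine.equation_iff_nonsingular, WeierstrassCurve.Affine.equation_iff]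
  simp [Wc]

lemma chord {m : F} {x₁ y₁ x₂ y₂ : F} (h₁ : (Wc m).Nonsingular x₁ y₁)
    (h₂ : (Wc m).Nonsingular x₂ y₂) (hx : x₁ ≠ x₂) :
    ∃ h, -(Affine.Point.some x₁ y₁ h₁ + Affine.Point.some x₂ y₂ h₂) =
      Affine.Point.some (W' := Wc m) (((y₁ - y₂) / (x₁ - x₂)) ^ 2 - x₁ - x₂)
        ((y₁ - y₂) / (x₁ - x₂) * (((y₁ - y₂) / (x₁ - x₂)) ^ 2 - x₁ - x₂) +
          (y₁ - (y₁ - y₂) / (x₁ - x₂) * x₁)) h := by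
  rw [Affine.Point.add_of_X_ne hx, Affine.Point.neg_some]
  have e1 : (Wc m).addX x₁ x₂ ((Wc m).slope x₁ x₂ y₁ y₂) =
      ((y₁ - y₂) / (x₁ - x₂)) ^ 2 - x₁ - x₂ := by
    rw [Affine.slope_of_X_ne hx]; simp [Affine.addX, Wc]
  have e2 : (Wc m).negY ((Wc m).addX x₁ x₂ ((Wc m).slope x₁ x₂ y₁ y₂))
      ((Wc m).addY x₁ x₂ y₁ ((Wc m).slope x₁ x₂ y₁ y₂)) =
      ((y₁ - y₂) / (x₁ - x₂) * (((y₁ - y₂) / (x₁ - x₂)) ^ 2 - x₁ - x₂) +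
          (y₁ - (y₁ - y₂) / (x₁ - x₂) * x₁)) := by
    rw [Affine.slope_of_X_ne hx]; simp [Affine.addX, Affine.addY, Affine.negAddY, Affine.negY, Wc]
    ring
  refine ⟨?_, ?_⟩
  · rw [← e2, ← e1]; exact (Affine.nonsingular_neg _ _).2 (Affine.nonsingular_add h₁ h₂ (fun h => hx h.1))
  · simp only [Affine.Point.some.injEq]
    exact ⟨e1, e2⟩

lemma chord_prod {m x₁ y₁ x₂ y₂ x₃ y₃ l n : F} (h₁ : y₁ ^ 2 + m * y₁ = x₁ ^ 3)
    (h₂ : y₂ ^ 2 + m * y₂ = x₂ ^ 3) (hx : x₁ ≠ x₂) (hl : l * (x₁ - x₂) = y₁ - y₂)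
    (hn : n = y₁ - l * x₁) (hx₃ : x₃ = l ^ 2 - x₁ - x₂) (hy₃ : y₃ = l * x₃ + n) :
    y₁ * y₂ * y₃ = n ^ 3 ∧ (y₁ + m) * (y₂ + m) * (y₃ + m) = (n + m) ^ 3 := by
  have hx' : x₁ - x₂ ≠ 0 := sub_ne_zero.2 hx
  have e1 : y₁ = l * x₁ + n := by rw [hn]; ring
  have e2 : y₂ = l * x₂ + n := by linear_combination e1 + hl
  subst e1 e2 hy₃ hx₃
  -- symmetric function relations
  have s2 : x₁ * x₂ + (x₁ + x₂) * (l ^ 2 - x₁ - x₂) = -(2 * l * n + m * l) := by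
    apply mul_left_cancel₀ hx'
    linear_combination  h₁ - h₂
  have s3 : x₁ * x₂ * (l ^ 2 - x₁ - x₂) = n ^ 2 + m * n := by
    linear_combination x₁ * s2 - h₁
  constructor
  · linear_combination l ^ 3 * s3 + l ^ 2 * n * s2
  · linear_combination l ^ 3 * s3 + l ^ 2 * (n + m) * s2

variable {ω : F} 

/-- The automorphism `(X, Y) ↦ (ωX, Y)`. -/
def omegaFun [CharZero F] {m : F} (hm : m ≠ 0) (hω : ω ^ 3 = 1) : (Wc m).Point → (Wc m).Point
  | .zero => .zero
  | .some x y h => .some (ω * x) y (by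
      rw [ns_iff hm] at h ⊢; rw [h, mul_pow, hω, one_mul])

lemma omega_add [CharZero F] {m : F} (hm : m ≠ 0) (hω : ω ^ 3 = 1) (P Q : (Wc m).Point) :
    omegaFun hm hω (P + Q) = omegaFun hm hω P + omegaFun hm hω Q := by
  have hω0 : ω ≠ 0 := by rintro rfl; simp at hω
  rcases P with _ | ⟨x₁, y₁, h₁⟩
  · change omegaFun hm hω (0 + Q) = 0 + omegaFun hm hω Q
    rw [zero_add, zero_add]
  rcases Q with _ | ⟨x₂, y₂, h₂⟩
  · change omegaFun hm hω (_ + 0) = _ + 0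
    rw [add_zero, add_zero]
  by_cases hxy : x₁ = x₂ ∧ y₁ = (Wc m).negY x₂ y₂
  · rw [Affine.Point.add_of_Y_eq hxy.1 hxy.2]
    change 0 = Affine.Point.some _ _ _ + Affine.Point.some _ _ _
    rw [Affine.Point.add_of_Y_eq]
    · rw [hxy.1]
    · rw [hxy.2]; simp [Affine.negY, Wc]
  · rw [Affine.Point.add_some hxy]
    have hxy' : ¬(ω * x₁ = ω * x₂ ∧ y₁ = (Wc m).negY (ω * x₂) y₂) := by
      rintro ⟨a, b⟩
      exact hxy ⟨mul_left_cancel₀ hω0 a, by rw [b]; simp [Affine.negY, Wc]⟩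
    change Affine.Point.some _ _ _ = Affine.Point.some _ _ _ + Affine.Point.some _ _ _
    rw [Affine.Point.add_some hxy']
    have hs : (Wc m).slope (ω * x₁) (ω * x₂) y₁ y₂ = ω ^ 2 * (Wc m).slope x₁ x₂ y₁ y₂ := by
      by_cases hx : x₁ = x₂
      · have hy : y₁ ≠ (Wc m).negY x₂ y₂ := fun h => hxy ⟨hx, h⟩
        rw [Affine.slope_of_Y_ne hx hy, Affine.slope_of_Y_ne (by rw [hx])
          (by intro h; apply hy; rw [h]; simp [Affine.negY, Wc])]
        simp [Affine.negY, Wc]; ring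
      · rw [Affine.slope_of_X_ne hx, Affine.slope_of_X_ne (fun h => hx (mul_left_cancel₀ hω0 h))]
        have : x₁ - x₂ ≠ 0 := sub_ne_zero.2 hx
        rw [← mul_sub]
        field_simp
        linear_combination (-(y₁-y₂)) * hω
    have e1 : ω * (Wc m).addX x₁ x₂ ((Wc m).slope x₁ x₂ y₁ y₂) =
        (Wc m).addX (ω * x₁) (ω * x₂) ((Wc m).slope (ω * x₁) (ω * x₂) y₁ y₂) := by
      rw [hs]; simp [Affine.addX, Wc]
      linear_combination (-ω * (Affine.slope { a₁ := 0, a₂ := 0, a₃ := m, a₄ := 0, a₆ := 0 } x₁ x₂ y₁ y₂)^2) * hω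
    simp only [Affine.Point.some.injEq]
    refine ⟨e1, ?_⟩
    simp only [Affine.addY, Affine.negAddY, ← e1]
    rw [hs]
    generalize (Wc m).slope x₁ x₂ y₁ y₂ = s
    generalize (Wc m).addX x₁ x₂ s = a
    simp only [Affine.negY, Wc]
    linear_combination (s * (a - x₁)) * hω

/-- `φ = ω² - ω` -/
def phi [CharZero F] {m : F} (hm : m ≠ 0) (hω : ω ^ 3 = 1) : (Wc m).Point →+ (Wc m).Point where
  toFun P := omegaFun hm hω (omegaFun hm hω P) - omegaFun hm hω P
  map_zero' := by
    have : omegaFun hm hω (0 : (Wc m).Point) = 0 := rfl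
    simp [this]
  map_add' P Q := by
    simp only [omega_add]; abel

/-- `φ` kills `0` and points with `X = 0`; otherwise explicit formula. -/
lemma phi_some [CharZero F] {m : F} (hm : m ≠ 0) (hω : ω ^ 3 = 1) (hω1 : ω ^ 2 + ω + 1 = 0)
    {x y : F} (h : (Wc m).Nonsingular x y) (hx : x ≠ 0) :
    ∃ h', phi hm hω (.some x y h) = .some (-(x ^ 3 + m ^ 2) / (3 * x ^ 2))
      ((y - ω * m) ^ 3 / (3 * (ω - ω ^ 2) * x ^ 3)) h' := by
  have h3 : (3 : F) ≠ 0 := by norm_num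
  have hθ : (ω - ω ^ 2) ^ 2 = -3 := by linear_combination (ω ^ 2 - 3 * ω + 3) * hω1
  have hθ0 : ω - ω ^ 2 ≠ 0 := by
    intro h0; rw [h0] at hθ; norm_num at hθ
  have heq := (ns_iff hm x y).1 h
  have h1 : (Wc m).Nonsingular (ω * x) y := by
    rw [ns_iff hm]; rw [heq, mul_pow, hω, one_mul]
  have h2' : (Wc m).Nonsingular (ω * (ω * x)) y := by
    rw [ns_iff hm]; rw [heq, mul_pow, mul_pow, hω, one_mul, one_mul]
  have h2 : (Wc m).Nonsingular (ω * (ω * x)) (-m - y) := by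
    rw [ns_iff hm]; rw [mul_pow, mul_pow, hω, one_mul, one_mul, ← heq]; ring
  have e : phi hm hω (.some x y h) = -(Affine.Point.some _ _ h1 + Affine.Point.some _ _ h2) := by
    change Affine.Point.some _ _ h2' - Affine.Point.some _ _ h1 = _
    have : Affine.Point.some _ _ h2 = -Affine.Point.some _ _ h2' := by
      rw [Affine.Point.neg_some]
      simp only [Affine.Point.some.injEq, true_and]
      simp [Affine.negY, Wc]; ring
    rw [this]; abel
  have hne : ω * x - ω * (ω * x) ≠ 0 := by
    have : ω * x - ω * (ω * x) = (ω - ω ^ 2) * x := by ring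
    rw [this]; exact mul_ne_zero hθ0 hx
  obtain ⟨h', e'⟩ := chord h1 h2 (sub_ne_zero.1 hne)
  set l := (y - (-m - y)) / (ω * x - ω * (ω * x)) with hl
  have hl' : l * ((ω - ω ^ 2) * x) = 2 * y + m := by
    have : ω * x - ω * (ω * x) = (ω - ω ^ 2) * x := by ring
    rw [hl, this, div_mul_cancel₀ _ (mul_ne_zero hθ0 hx)]; ring
  have hpr := (chord_prod (m := m) (x₁ := ω * x) (y₁ := y) (x₂ := ω * (ω * x)) (y₂ := -m - y)
    (l := l) ((ns_iff hm _ _).1 h1) ((ns_iff hm _ _).1 h2) (sub_ne_zero.1 hne)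
    (by rw [hl, div_mul_cancel₀ _ hne]) rfl rfl rfl).1
  have hn : (ω - ω ^ 2) * (y - l * (ω * x)) = y - ω * m := by
    linear_combination (-ω) * hl' - y * hω1
  have eX : l ^ 2 - ω * x - ω * (ω * x) = -(x ^ 3 + m ^ 2) / (3 * x ^ 2) := by
    rw [eq_div_iff (by positivity)]
    have := congrArg (· ^ 2) hl'
    simp only [mul_pow, hθ] at this
    linear_combination (-1) * this - 4 * heq - 3 * x ^ 3 * hω1
  have eY : l * (l ^ 2 - ω * x - ω * (ω * x)) + (y - l * (ω * x)) =
      (y - ω * m) ^ 3 / (3 * (ω - ω ^ 2) * x ^ 3) := by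
    rw [eq_div_iff (by positivity), ← hn, mul_pow, ← hpr]
    set Y := l * (l ^ 2 - ω * x - ω * (ω * x)) + (y - l * (ω * x))
    linear_combination (-(y * (-m - y) * Y * (ω - ω ^ 2))) * hθ - 3 * (ω - ω ^ 2) * Y * heq
  refine ⟨by rw [← eX, ← eY]; exact h', ?_⟩
  rw [e, e']
  simp only [Affine.Point.some.injEq]
  exact ⟨eX, eY⟩

lemma phi_zero_x [CharZero F] {m : F} (hm : m ≠ 0) (hω : ω ^ 3 = 1)
    {y : F} (h : (Wc m).Nonsingular 0 y) : phi hm hω (.some 0 y h) = 0 := by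
  change omegaFun hm hω (omegaFun hm hω _) - omegaFun hm hω _ = 0
  have : omegaFun hm hω (Affine.Point.some 0 y h) = Affine.Point.some 0 y h := by
    simp only [omegaFun, Affine.Point.some.injEq, and_true]; ring
  rw [this, this, sub_self]

/-- The explicit preimage. -/
lemma mem_phi [CharZero F] {m : F} (hm : m ≠ 0) (hω : ω ^ 3 = 1) (hω1 : ω ^ 2 + ω + 1 = 0)
    {x y r s : F} (h : (Wc m).Nonsingular x y) (hrs : r ^ 3 - s ^ 3 = m) (hx : x = r * s)
    (hy : y = s ^ 3) : ∃ R, phi hm hω R = .some x y h := by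
  have h3 : (3 : F) ≠ 0 := by norm_num
  have hθ : (ω - ω ^ 2) ^ 2 = -3 := by linear_combination (ω ^ 2 - 3 * ω + 3) * hω1
  have hθ0 : ω - ω ^ 2 ≠ 0 := by
    intro h0; rw [h0] at hθ; norm_num at hθ
  have hm' : (r - s) * (r ^ 2 + r * s + s ^ 2) = m := by rw [← hrs]; ring
  set q := r ^ 2 + r * s + s ^ 2 with hq
  have hq0 : q ≠ 0 := by rintro h0; rw [h0] at hm'; apply hm; rw [← hm', mul_zero]
  have hR : (Wc m).Nonsingular (-q) (q * (ω * r - ω ^ 2 * s)) := by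
    rw [ns_iff hm, ← hm']
    have e : (ω * r - ω ^ 2 * s) ^ 2 + (r - s) * (ω * r - ω ^ 2 * s) = - q := by
      rw [hq]
      linear_combination (r ^ 2 - 2 * ω * r * s + ω ^2 * s^2 - ω * s ^ 2 + s^2+r*s) * hω1
    linear_combination q ^ 2 * e
  obtain ⟨h', e⟩ := phi_some hm hω hω1 hR (neg_ne_zero.2 hq0)
  refine ⟨_, e.trans ?_⟩
  simp only [Affine.Point.some.injEq]
  constructor
  · have hqn : -q ≠ 0 := neg_ne_zero.2 hq0
    rw [div_eq_iff (by positivity), hx, ← hm', hq]; ring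
  · have hqn : -q ≠ 0 := neg_ne_zero.2 hq0
    rw [div_eq_iff (by positivity), hy, ← hm']
    have : q * (ω * r - ω ^ 2 * s) - ω * ((r - s) * q) = q * s * (ω - ω ^ 2) := by ring
    rw [this]
    linear_combination (q ^ 3 * s ^ 3 * (ω - ω ^ 2)) * hθ

lemma same_class [CharZero F] {m : F} (hm : m ≠ 0) (hω : ω ^ 3 = 1) (hω1 : ω ^ 2 + ω + 1 = 0)
    {x₁ y₁ x₂ y₂ t : F} (h₁ : (Wc m).Nonsingular x₁ y₁) (h₂ : (Wc m).Nonsingular x₂ y₂)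
    (hx₁ : x₁ ≠ 0) (hx₂ : x₂ ≠ 0) (ht : y₁ = t ^ 3 * y₂) :
    ∃ R, Affine.Point.some x₁ y₁ h₁ - Affine.Point.some x₂ y₂ h₂ = phi hm hω R := by
  have e₁ := (ns_iff hm _ _).1 h₁
  have e₂ := (ns_iff hm _ _).1 h₂
  have hy₁ : y₁ ≠ 0 := by
    rintro rfl; apply hx₁; apply pow_eq_zero_iff (n := 3) (by norm_num) |>.1; rw [← e₁]; ring
  have hy₂ : y₂ ≠ 0 := by
    rintro rfl; apply hx₂; apply pow_eq_zero_iff (n := 3) (by norm_num) |>.1; rw [← e₂]; ring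
  have ht0 : t ≠ 0 := by
    rintro rfl; apply hy₁; rw [ht]; ring
  have hneg : (Wc m).Nonsingular x₂ (-m - y₂) := by
    rw [ns_iff hm, ← e₂]; ring
  have hnegP : -Affine.Point.some x₂ y₂ h₂ = Affine.Point.some _ _ hneg := by
    rw [Affine.Point.neg_some]
    simp only [Affine.Point.some.injEq, true_and]
    simp [Affine.negY, Wc]; ring
  by_cases hx : x₁ = x₂
  · subst hx
    have hc : (y₁ - y₂) * (y₁ + y₂ + m) = 0 := by linear_combination e₁ - e₂
    rcases mul_eq_zero.1 hc with hc | hc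
    · have : y₁ = y₂ := sub_eq_zero.1 hc
      subst this
      exact ⟨0, by simp⟩
    · have hs : y₁ = (-y₁ / (t * x₁)) ^ 3 := by
        have : y₁ * y₂ = - x₁ ^ 3 := by linear_combination y₁ * hc - e₁
        rw [div_pow, eq_div_iff (by positivity)]
        linear_combination (y₁ * t ^ 3) * this + y₁ ^ 2 * ht
      set s := -y₁ / (t * x₁) with hsdef
      have hs0 : s ≠ 0 := by intro h0; rw [h0] at hs; apply hy₁; rw [hs]; ring
      obtain ⟨R, hR⟩ := mem_phi hm hω hω1 (r := x₁ / s) (s := s) h₁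
        (by rw [div_pow, ← hs]; field_simp; linear_combination -e₁) (by field_simp) hs
      refine ⟨R + R, ?_⟩
      rw [map_add, hR, sub_eq_add_neg, hnegP]
      congr 1
      simp only [Affine.Point.some.injEq, true_and]
      linear_combination -hc
  · obtain ⟨h₃, e⟩ := chord h₁ hneg hx
    rw [sub_eq_add_neg, hnegP]
    have hx' : x₁ - x₂ ≠ 0 := sub_ne_zero.2 hx
    obtain ⟨hp, hp'⟩ := chord_prod (m := m) (l := (y₁ - (-m - y₂)) / (x₁ - x₂))
      e₁ ((ns_iff hm _ _).1 hneg) hx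
      (by rw [div_mul_cancel₀ _ hx']) rfl rfl rfl
    have e₃ := (ns_iff hm _ _).1 h₃
    set l := (y₁ - (-m - y₂)) / (x₁ - x₂)
    set n := y₁ - l * x₁
    generalize l ^ 2 - x₁ - x₂ = x₃ at *
    generalize l * x₃ + n = y₃ at *
    suffices ∃ R, phi hm hω R = .some x₃ y₃ h₃ by
      obtain ⟨R, hR⟩ := this
      refine ⟨-R, ?_⟩
      rw [map_neg, hR, ← e, neg_neg]
    by_cases hn : n = 0
    · have hy3 : y₃ = 0 := by
        have hne : y₁ * (-m - y₂) ≠ 0 := by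
          refine mul_ne_zero hy₁ fun h0 => hx₂ ?_
          apply pow_eq_zero_iff (n := 3) (by norm_num) |>.1
          rw [← e₂]; linear_combination (-y₂) * h0
        rw [hn] at hp
        have : (y₁ * (-m - y₂)) * y₃ = 0 := by rw [hp]; ring
        exact (mul_eq_zero.1 this).resolve_left hne
      have hx3 : x₃ = 0 := by
        apply pow_eq_zero_iff (n := 3) (by norm_num) |>.1; rw [← e₃, hy3]; ring
      refine mem_phi hm hω hω1 (r := -m * t / x₁) (s := 0) h₃ ?_ (by rw [hx3]; ring)
        (by rw [hy3]; ring)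
      rw [hn, hy3] at hp'
      have hm2 : m ^ 2 = - (y₁ + m) * y₂ := by
        apply mul_left_cancel₀ hm; linear_combination -hp'
      have : t ^ 3 * m ^ 2 = - x₁ ^ 3 := by
        linear_combination t ^ 3 * hm2 - e₁ + (y₁ + m) * ht
      field_simp
      linear_combination (-m) * this
    · have hs : y₃ = (-n / (t * x₂)) ^ 3 := by
        have : (-n / (t * x₂)) ^ 3 = - n ^ 3 / (t ^ 3 * x₂ ^ 3) := by
          field_simp
        rw [this, ← hp, ht, ← e₂]
        have h5 : y₂ + m ≠ 0 := by
          intro h0; apply hx₂; apply pow_eq_zero_iff (n := 3) (by norm_num) |>.1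
          rw [← e₂]; linear_combination y₂ * h0
        have h6 : y₂ ^ 2 + m * y₂ = y₂ * (y₂ + m) := by ring
        rw [h6]
        field_simp
        ring
      set s := -n / (t * x₂) with hsdef
      have hs0 : s ≠ 0 := by
        rw [hsdef]; exact div_ne_zero (neg_ne_zero.2 hn) (mul_ne_zero ht0 hx₂)
      refine mem_phi hm hω hω1 (r := x₃ / s) (s := s) h₃ ?_ (by field_simp) hs
      rw [div_pow, ← hs]
      have : y₃ ≠ 0 := by rw [hs]; exact pow_ne_zero _ hs0
      field_simp; linear_combination -e₃

end Curve
end DCubic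

namespace DCubic
open NumberField

section Heights
set_option linter.unusedSectionVars false
variable {K : Type*} [Field K] [NumberField K]

lemma zeta_sq {ζ : K} (hζ : IsPrimitiveRoot ζ 3) :
    hζ.toInteger ^ 2 + hζ.toInteger + 1 = 0 := by
  have h := hζ.toInteger_cube_eq_one
  have h1 : hζ.toInteger ≠ 1 := hζ.toInteger_isPrimitiveRoot.ne_one (by norm_num)
  have : (hζ.toInteger - 1) * (hζ.toInteger ^ 2 + hζ.toInteger + 1) = 0 := by
    linear_combination h
  exact (mul_eq_zero.1 this).resolve_left (sub_ne_zero.2 h1)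

lemma exists_coord [IsCyclotomicExtension {3} ℚ K] {ζ : K} (hζ : IsPrimitiveRoot ζ 3)
    (a : 𝓞 K) : ∃ x y : ℤ, a = x + y * hζ.toInteger := by
  have hdim : hζ.integralPowerBasis.dim = 2 := by
    rw [hζ.integralPowerBasis_dim]; rfl
  have := hζ.integralPowerBasis.basis.sum_repr a
  rw [← (finCongr hdim.symm).sum_comp] at this
  rw [Fin.sum_univ_two] at this
  refine ⟨hζ.integralPowerBasis.basis.repr a (finCongr hdim.symm 0),
    hζ.integralPowerBasis.basis.repr a (finCongr hdim.symm 1), this.symm.trans ?_⟩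
  rw [PowerBasis.coe_basis]
  simp [zsmul_eq_mul]

/-- size of an integer of `K` -/
noncomputable def nrm (σ : K →+* ℂ) (a : 𝓞 K) : ℝ := ‖σ (algebraMap (𝓞 K) K a)‖

/-- data on `K` -/
structure Good (σ : K →+* ℂ) (ω : 𝓞 K) : Prop where
  sq : ω ^ 2 + ω + 1 = 0
  coord : ∀ a : 𝓞 K, ∃ x y : ℤ, a = x + y * ω
  pid : IsPrincipalIdealRing (𝓞 K)

variable {σ : K →+* ℂ} {ω : 𝓞 K}

lemma nrm_mul (a b : 𝓞 K) : nrm σ (a * b) = nrm σ a * nrm σ b := by simp [nrm]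
lemma nrm_pow (a : 𝓞 K) (n : ℕ) : nrm σ (a ^ n) = nrm σ a ^ n := by simp [nrm]
lemma nrm_add (a b : 𝓞 K) : nrm σ (a + b) ≤ nrm σ a + nrm σ b := by
  simp only [nrm, map_add]; exact norm_add_le _ _
lemma nrm_sub (a b : 𝓞 K) : nrm σ (a - b) ≤ nrm σ a + nrm σ b := by
  simp only [nrm, map_sub]; exact norm_sub_le _ _
lemma nrm_neg (a : 𝓞 K) : nrm σ (-a) = nrm σ a := by simp [nrm]
lemma nrm_nonneg (a : 𝓞 K) : 0 ≤ nrm σ a := norm_nonneg _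
lemma nrm_zero : nrm σ 0 = 0 := by simp [nrm]
lemma nrm_int (n : ℤ) : nrm σ (n : 𝓞 K) = |(n : ℝ)| := by simp [nrm]

lemma om_complex (h : ω ^ 2 + ω + 1 = 0) : (σ (algebraMap (𝓞 K) K ω)).re = -1 / 2 ∧
    (σ (algebraMap (𝓞 K) K ω)).im ^ 2 = 3 / 4 := by
  have h' : (σ (algebraMap (𝓞 K) K ω)) ^ 2 + σ (algebraMap (𝓞 K) K ω) + 1 = 0 := by
    rw [← map_pow, ← map_pow, ← map_add, ← map_add]
    have : (1 : ℂ) = σ (algebraMap (𝓞 K) K 1) := by simp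
    rw [this, ← map_add, ← map_add, h]; simp
  set z := σ (algebraMap (𝓞 K) K ω)
  have hre := congrArg Complex.re h'
  have him := congrArg Complex.im h'
  simp [pow_two] at hre him
  have h2 : z.im * (2 * z.re + 1) = 0 := by linear_combination him
  rcases mul_eq_zero.1 h2 with h0 | h0
  · rw [h0] at hre; nlinarith [sq_nonneg (z.re + 1 / 2)]
  · have : z.re = -1 / 2 := by linarith
    refine ⟨this, ?_⟩
    rw [this] at hre; linarith

lemma nrm_sq (h : ω ^ 2 + ω + 1 = 0) (x y : ℤ) :
    nrm σ (x + y * ω) ^ 2 = ((x ^ 2 - x * y + y ^ 2 : ℤ) : ℝ) := by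
  obtain ⟨h1, h2⟩ := om_complex (σ := σ) h
  rw [nrm, ← Complex.normSq_eq_norm_sq, Complex.normSq_apply]
  simp [h1]
  linear_combination (y : ℝ) ^ 2 * h2

lemma nrm_om (h : ω ^ 2 + ω + 1 = 0) : nrm σ ω = 1 := by
  have := nrm_sq (σ := σ) h 0 1
  simp at this
  rcases this with h | h
  · exact h
  · linarith [nrm_nonneg (σ := σ) ω]

lemma nrm_ge_one (hg : Good σ ω) {a : 𝓞 K} (ha : a ≠ 0) : 1 ≤ nrm σ a := by
  obtain ⟨x, y, rfl⟩ := hg.coord a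
  have h := nrm_sq (σ := σ) hg.sq x y
  have h0 : 0 < x ^ 2 - x * y + y ^ 2 := by
    by_contra hle
    have hy : y = 0 := by
      by_contra hy
      have : 0 < y ^ 2 := by positivity
      nlinarith [sq_nonneg (2 * x - y)]
    subst hy
    have hx : x = 0 := by
      by_contra hx
      have : 0 < x ^ 2 := by positivity
      nlinarith
    subst hx
    simp at ha
  have h1 : (1 : ℝ) ≤ nrm σ (x + y * ω) ^ 2 := by rw [h]; exact_mod_cast h0
  by_contra hlt
  push Not at hlt
  nlinarith [nrm_nonneg (σ := σ) (x + y * ω)]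

lemma nrm_dvd (hg : Good σ ω) {a b : 𝓞 K} (hb : b ≠ 0) (h : a ∣ b) : nrm σ a ≤ nrm σ b := by
  obtain ⟨c, rfl⟩ := h
  have : c ≠ 0 := right_ne_zero_of_mul hb
  rw [nrm_mul]
  nlinarith [nrm_ge_one hg this, nrm_nonneg (σ := σ) a]

/-- `f` has height at most `T` -/
def Hle (σ : K →+* ℂ) (f : K) (T : ℝ) : Prop :=
  ∃ p q : 𝓞 K, q ≠ 0 ∧ f * algebraMap (𝓞 K) K q = algebraMap (𝓞 K) K p ∧
    nrm σ p ≤ T ∧ nrm σ q ≤ T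

lemma Hle.mono {f : K} {S T : ℝ} (h : Hle σ f S) (hST : S ≤ T) : Hle σ f T := by
  obtain ⟨p, q, h1, h2, h3, h4⟩ := h
  exact ⟨p, q, h1, h2, h3.trans hST, h4.trans hST⟩

lemma Hle.nonneg {f : K} {S : ℝ} (h : Hle σ f S) : 0 ≤ S := by
  obtain ⟨p, q, h1, h2, h3, h4⟩ := h
  exact (nrm_nonneg _).trans h3

lemma Hle.neg {f : K} {S : ℝ} (h : Hle σ f S) : Hle σ (-f) S := by
  obtain ⟨p, q, h1, h2, h3, h4⟩ := h
  exact ⟨-p, q, h1, by rw [map_neg, ← h2]; ring, by rwa [nrm_neg], h4⟩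

lemma Hle.mul {f g : K} {S T : ℝ} (h : Hle σ f S) (h' : Hle σ g T) : Hle σ (f * g) (S * T) := by
  have hS := h.nonneg
  obtain ⟨p, q, h1, h2, h3, h4⟩ := h
  obtain ⟨p', q', h1', h2', h3', h4'⟩ := h'
  refine ⟨p * p', q * q', mul_ne_zero h1 h1', by rw [map_mul, map_mul, ← h2, ← h2']; ring, ?_, ?_⟩
  · rw [nrm_mul]; exact mul_le_mul h3 h3' (nrm_nonneg _) hS
  · rw [nrm_mul]; exact mul_le_mul h4 h4' (nrm_nonneg _) hS

lemma Hle.inv {f : K} {S : ℝ} (h : Hle σ f S) (hf : f ≠ 0) : Hle σ f⁻¹ S := by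
  obtain ⟨p, q, h1, h2, h3, h4⟩ := h
  have hq : algebraMap (𝓞 K) K q ≠ 0 := by simpa using h1
  refine ⟨q, p, ?_, by rw [← h2]; field_simp, h4, h3⟩
  rintro rfl
  simp [hf, h1] at h2

lemma Hle.add {f g : K} {S T : ℝ} (h : Hle σ f S) (h' : Hle σ g T) :
    Hle σ (f + g) (2 * (S * T)) := by
  have hS := h.nonneg
  have hT := h'.nonneg
  obtain ⟨p, q, h1, h2, h3, h4⟩ := h
  obtain ⟨p', q', h1', h2', h3', h4'⟩ := h'
  refine ⟨p * q' + p' * q, q * q', mul_ne_zero h1 h1', ?_, ?_, ?_⟩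
  · rw [map_add, map_mul, map_mul, map_mul, ← h2, ← h2']; ring
  · refine (nrm_add _ _).trans ?_
    rw [nrm_mul, nrm_mul]
    have := mul_le_mul h3 h4' (nrm_nonneg _) hS
    have := mul_le_mul h3' h4 (nrm_nonneg _) hT
    linarith
  · rw [nrm_mul]
    have := mul_le_mul h4 h4' (nrm_nonneg _) hS
    nlinarith [mul_nonneg hS hT]

lemma Hle.sub {f g : K} {S T : ℝ} (h : Hle σ f S) (h' : Hle σ g T) :
    Hle σ (f - g) (2 * (S * T)) := by
  rw [sub_eq_add_neg]; exact h.add h'.neg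

lemma exists_coprime (hg : Good σ ω) (f : K) : ∃ p q : 𝓞 K, q ≠ 0 ∧ IsCoprime p q ∧
    f * algebraMap (𝓞 K) K q = algebraMap (𝓞 K) K p := by
  have := hg.pid
  obtain ⟨p, q, hpq, h⟩ := IsFractionRing.exists_reduced_fraction (A := 𝓞 K) f
  refine ⟨p, q, nonZeroDivisors.coe_ne_zero q, hpq.isCoprime, ?_⟩
  rw [← h, IsLocalization.mk'_spec]

lemma Hle.cbrt (hg : Good σ ω) {f : K} {S : ℝ} (h : Hle σ (f ^ 3) S) : Hle σ f S := by
  obtain ⟨p, q, hq, hc, e⟩ := exists_coprime hg f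
  obtain ⟨p', q', h1, h2, h3, h4⟩ := h
  have e' : p ^ 3 * q' = p' * q ^ 3 := by
    apply FaithfulSMul.algebraMap_injective (𝓞 K) K
    simp only [map_mul, map_pow, ← e, ← h2]; ring
  have hq1 : q ^ 3 ∣ q' := by
    apply (IsCoprime.pow (m := 3) (n := 3) hc.symm).dvd_of_dvd_mul_left
    rw [e']; exact dvd_mul_left _ _
  have hp1 : p ^ 3 ∣ p' := by
    apply (IsCoprime.pow (m := 3) (n := 3) hc).dvd_of_dvd_mul_right
    rw [← e']; exact dvd_mul_right _ _
  have hS : 0 ≤ S := (nrm_nonneg _).trans h3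
  refine ⟨p, q, hq, e, ?_, ?_⟩
  · by_cases hp : p = 0
    · rw [hp, nrm_zero]; exact hS
    · have hp' : p' ≠ 0 := by
        rintro rfl
        rw [zero_mul] at e'
        exact mul_ne_zero (pow_ne_zero 3 hp) h1 e'
      exact (nrm_dvd hg hp' ((dvd_pow_self p (by norm_num)).trans hp1)).trans h3
  · exact (nrm_dvd hg h1 ((dvd_pow_self q (by norm_num)).trans hq1)).trans h4

/-- The key height inequality for `φ`. -/
lemma Hle.phi (hg : Good σ ω) {f : K} {w : K} (hw : w = algebraMap (𝓞 K) K ω) {S T : ℝ}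
    (hf : f ≠ 0) (hf1 : f + 1 ≠ 0)
    (h : Hle σ ((f - w) ^ 3 / (3 * (w - w ^ 2) * (f * (f + 1)))) T)
    (hS : 0 ≤ S) (hST : 12 * T ≤ S ^ 3) : Hle σ f (3 * S) := by
  obtain ⟨p, q, hq, hc, e⟩ := exists_coprime hg f
  obtain ⟨P, Q, h1, h2, h3, h4⟩ := h
  have inj := FaithfulSMul.algebraMap_injective (𝓞 K) K
  have hsq := hg.sq
  have hsqK : w ^ 2 + w + 1 = 0 := by
    rw [hw]
    have := congrArg (algebraMap (𝓞 K) K) hsq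
    simpa using this
  have hθ : (w - w ^ 2) ^ 2 = -3 := by linear_combination (w ^ 2 - 3 * w + 3) * hsqK
  have hθ0 : w - w ^ 2 ≠ 0 := by
    intro h0; rw [h0] at hθ; norm_num at hθ
  have hqK : algebraMap (𝓞 K) K q ≠ 0 := by simpa using hq
  have e' : (p - ω * q) ^ 3 * Q = 3 * (ω - ω ^ 2) * (p * q * (p + q)) * P := by
    apply inj
    simp only [map_mul, map_pow, map_sub, map_add, map_ofNat, ← e, ← h2, ← hw]
    generalize w - w ^ 2 = t at hθ0 ⊢
    field_simp
  -- coprimality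
  obtain ⟨u, v, huv⟩ := hc
  have c1 : IsCoprime (p - ω * q) p := by
    refine ⟨-ω ^ 2 * v, u + ω ^ 2 * v, ?_⟩
    have : ω ^ 3 = 1 := by linear_combination (ω - 1) * hsq
    linear_combination huv + v * q * this
  have c2 : IsCoprime (p - ω * q) q := ⟨u, v + ω * u, by linear_combination huv⟩
  have c3 : IsCoprime (p - ω * q) (p + q) := by
    refine ⟨-ω * u + ω * v, (1 + ω) * u - ω * v, ?_⟩
    linear_combination huv + (u - v) * q * hsq
  have cc : IsCoprime ((p - ω * q) ^ 3) (p * q * (p + q)) :=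
    IsCoprime.pow_left ((c1.mul_right c2).mul_right c3)
  have d1 : p * q * (p + q) ∣ Q := by
    apply cc.symm.dvd_of_dvd_mul_left
    rw [e']; exact ⟨3 * (ω - ω ^ 2) * P, by ring⟩
  have d2 : (p - ω * q) ^ 3 ∣ 3 * (ω - ω ^ 2) * P := by
    apply cc.dvd_of_dvd_mul_left
    exact ⟨Q, by rw [e']; ring⟩
  have n1 : nrm σ (p * q * (p + q)) ≤ T := (nrm_dvd hg h1 d1).trans h4
  have no : nrm σ ω = 1 := nrm_om hsq
  have nθ : nrm σ (3 * (ω - ω ^ 2)) ≤ 6 := by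
    rw [nrm_mul]
    have a1 : nrm σ (3 : 𝓞 K) = 3 := by
      have := nrm_int (σ := σ) 3; simpa using this
    have a2 : nrm σ (ω - ω ^ 2) ≤ 2 := by
      refine (nrm_sub _ _).trans ?_
      rw [nrm_pow, no]; norm_num
    rw [a1]; linarith
  have hT : 0 ≤ T := (nrm_nonneg _).trans h4
  have n2 : nrm σ ((p - ω * q) ^ 3) ≤ 6 * T := by
    by_cases h0 : 3 * (ω - ω ^ 2) * P = 0
    · have : (p - ω * q) ^ 3 * Q = 0 := by rw [e']; linear_combination (p * q * (p + q)) * h0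
      rw [(mul_eq_zero.1 this).resolve_right h1, nrm_zero]; positivity
    · refine (nrm_dvd hg h0 d2).trans ?_
      rw [nrm_mul]
      exact mul_le_mul nθ h3 (nrm_nonneg _) (by norm_num)
  have n3 : nrm σ ((p - ω ^ 2 * q) ^ 3) ≤ 12 * T := by
    have : (p - ω ^ 2 * q) ^ 3 = (p - ω * q) ^ 3 + 3 * (ω - ω ^ 2) * (p * q * (p + q)) := by
      have : ω ^ 3 = 1 := by linear_combination (ω - 1) * hsq
      linear_combination (3 * ω * p * q ^ 2 -  q ^ 3 * (ω ^ 3 ) ) * this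
    rw [this]
    refine (nrm_add _ _).trans ?_
    rw [nrm_mul (3 * _)]
    have := mul_le_mul nθ n1 (nrm_nonneg _) (by norm_num)
    linarith
  rw [nrm_pow] at n2 n3
  have m2 : nrm σ (p - ω * q) ≤ S :=
    le_of_pow_le_pow_left₀ (n := 3) (by norm_num) hS (by linarith)
  have m3 : nrm σ (p - ω ^ 2 * q) ≤ S :=
    le_of_pow_le_pow_left₀ (n := 3) (by norm_num) hS (by linarith)
  have hqS : nrm σ q ≤ 2 * S := by
    have hne : (ω - ω ^ 2) * q ≠ 0 := by
      refine mul_ne_zero ?_ hq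
      intro h0; apply hθ0; rw [hw, ← map_pow, ← map_sub, h0, map_zero]
    refine (nrm_dvd hg hne (dvd_mul_left _ _)).trans ?_
    have : (ω - ω ^ 2) * q = (p - ω ^ 2 * q) - (p - ω * q) := by ring
    rw [this]
    refine (nrm_sub _ _).trans ?_
    linarith
  refine ⟨p, q, hq, e, ?_, by linarith⟩
  have : p = (p - ω * q) + ω * q := by ring
  rw [this]
  refine (nrm_add _ _).trans ?_
  rw [nrm_mul, no]; linarith

/-- Counting elements of bounded height. -/
lemma count_nrm (hg : Good σ ω) {T : ℝ} (hT : 1 ≤ T) :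
    ∃ s : Finset (𝓞 K), (∀ a, nrm σ a ≤ T → a ∈ s) ∧ (s.card : ℝ) ≤ 25 * T ^ 2 := by
  classical
  let n : ℤ := ⌊2 * T⌋
  have hn : 0 ≤ n := Int.floor_nonneg.2 (by linarith)
  let I := Finset.Icc (-n) n
  refine ⟨(I ×ˢ I).image fun z => (z.1 : 𝓞 K) + z.2 * ω, ?_, ?_⟩
  · intro a ha
    obtain ⟨x, y, rfl⟩ := hg.coord a
    have h := nrm_sq (σ := σ) hg.sq x y
    have h' : nrm σ (x + y * ω) ^ 2 ≤ T ^ 2 := pow_le_pow_left₀ (nrm_nonneg _) ha 2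
    rw [h] at h'
    push_cast at h'
    have key : ∀ z : ℤ, (z : ℝ) ^ 2 ≤ (2 * T) ^ 2 → z ∈ I := by
      intro z hz
      have := abs_le_of_sq_le_sq' hz (by linarith)
      rw [Finset.mem_Icc]
      constructor
      · have : -z ≤ n := Int.le_floor.2 (by push_cast; linarith)
        linarith
      · exact Int.le_floor.2 this.2
    refine Finset.mem_image.2 ⟨(x, y), Finset.mem_product.2 ⟨key x ?_, key y ?_⟩, rfl⟩
    · nlinarith [sq_nonneg ((x : ℝ) - 2 * y)]
    · nlinarith [sq_nonneg (2 * (x : ℝ) - y)]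
  · have h1 : (((I ×ˢ I).image fun z => (z.1 : 𝓞 K) + z.2 * ω).card : ℝ) ≤ (I.card : ℝ) ^ 2 := by
      have := Finset.card_image_le (s := I ×ˢ I) (f := fun z => (z.1 : 𝓞 K) + z.2 * ω)
      rw [Finset.card_product] at this
      rw [pow_two]; exact_mod_cast this
    refine h1.trans ?_
    have h2 : (I.card : ℝ) = 2 * n + 1 := by
      have : (I.card : ℤ) = 2 * n + 1 := by
        rw [Int.card_Icc, Int.toNat_of_nonneg (by linarith)]; ring
      exact_mod_cast this
    have h3 : (n : ℝ) ≤ 2 * T := Int.floor_le _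
    have h4 : (0 : ℝ) ≤ n := by exact_mod_cast hn
    have : (I.card : ℝ) ≤ 5 * T := by linarith
    calc (I.card : ℝ) ^ 2 ≤ (5 * T) ^ 2 := pow_le_pow_left₀ (by positivity) this 2
      _ = _ := by ring

lemma count_Hle (hg : Good σ ω) {T : ℝ} (hT : 1 ≤ T) :
    ∃ s : Finset K, (∀ f, Hle σ f T → f ∈ s) ∧ (s.card : ℝ) ≤ 625 * T ^ 4 := by
  classical
  obtain ⟨s, hs, hc⟩ := count_nrm hg hT
  refine ⟨(s ×ˢ s).image fun z => algebraMap (𝓞 K) K z.1 / algebraMap (𝓞 K) K z.2, ?_, ?_⟩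
  · rintro f ⟨p, q, h1, h2, h3, h4⟩
    refine Finset.mem_image.2 ⟨(p, q), Finset.mem_product.2 ⟨hs p h3, hs q h4⟩, ?_⟩
    have hqK : algebraMap (𝓞 K) K q ≠ 0 := by simpa using h1
    rw [← h2]; field_simp
  · have := Finset.card_image_le (s := s ×ˢ s)
      (f := fun z => algebraMap (𝓞 K) K z.1 / algebraMap (𝓞 K) K z.2)
    rw [Finset.card_product] at this
    calc _ ≤ (s.card : ℝ) * s.card := by exact_mod_cast this
      _ ≤ (25 * T ^ 2) * (25 * T ^ 2) := by gcongr
      _ = _ := by ring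

end Heights
end DCubic

namespace DCubic
open NumberField IsDedekindDomain

section Classes
set_option linter.unusedSectionVars false
variable {K : Type*} [Field K] [NumberField K]

/-- normalised additive valuation (with a sign) -/
noncomputable def ordv (v : HeightOneSpectrum (𝓞 K)) (x : Kˣ) : ℤ :=
  Multiplicative.toAdd (v.valuationOfNeZero x)

lemma ordv_mul (v : HeightOneSpectrum (𝓞 K)) (x y : Kˣ) :
    ordv v (x * y) = ordv v x + ordv v y := by simp [ordv]
lemma ordv_pow (v : HeightOneSpectrum (𝓞 K)) (x : Kˣ) (n : ℕ) :
    ordv v (x ^ n) = n * ordv v x := by simp [ordv]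
lemma ordv_div (v : HeightOneSpectrum (𝓞 K)) (x y : Kˣ) :
    ordv v (x / y) = ordv v x - ordv v y := by simp [ordv]
lemma val_eq (v : HeightOneSpectrum (𝓞 K)) (x : Kˣ) :
    v.valuation K (x : K) = WithZero.exp (ordv v x) := by
  rw [← HeightOneSpectrum.valuationOfNeZero_eq]; rfl

lemma ordv_eq (v : HeightOneSpectrum (𝓞 K)) {x y : Kˣ}
    (h : v.valuation K (x : K) = v.valuation K (y : K)) : ordv v x = ordv v y := by
  rw [val_eq, val_eq] at h
  exact WithZero.exp_injective h

lemma cube_of_ordv (hpid : IsPrincipalIdealRing (𝓞 K)) (g : Kˣ) (h : ∀ v, (3 : ℤ) ∣ ordv v g) :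
    ∃ (u : (𝓞 K)ˣ) (c : K), (g : K) = (algebraMap (𝓞 K) K u) * c ^ 3 := by
  classical
  obtain ⟨a, b, hb, hab⟩ := IsFractionRing.div_surjective (A := 𝓞 K) (g : K)
  have hb0 : b ≠ 0 := nonZeroDivisors.ne_zero hb
  have hbK : (algebraMap (𝓞 K) K b) ≠ 0 := by simpa using hb0
  have ha0 : a ≠ 0 := by
    rintro rfl
    exact g.ne_zero (by simp [← hab])
  have haK : (algebraMap (𝓞 K) K a) ≠ 0 := by simpa using ha0
  set n := a * b ^ 2 with hn
  have hn0 : n ≠ 0 := mul_ne_zero ha0 (pow_ne_zero _ hb0)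
  let nK : Kˣ := g * (Units.mk0 _ hbK) ^ 3
  have hnK : (nK : K) = algebraMap (𝓞 K) K n := by
    simp only [nK, hn, Units.val_mul, ← hab, Units.val_pow_eq_pow_val, Units.val_mk0, map_mul,
      map_pow]
    field_simp
  have hA : Associates.mk (Ideal.span {n}) ≠ 0 := by
    rw [Ne, Associates.mk_eq_zero]
    simpa using hn0
  obtain ⟨J, hJ⟩ : ∃ J : Associates (Ideal (𝓞 K)), Associates.mk (Ideal.span {n}) = J ^ 3 := by
    refine Associates.is_pow_of_dvd_count hA fun p hp => ?_
    obtain ⟨I, rfl⟩ := Associates.mk_surjective p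
    rw [Associates.irreducible_mk] at hp
    have hI : Prime I := hp.prime
    let v : HeightOneSpectrum (𝓞 K) := ⟨I, Ideal.isPrime_of_prime hI, hI.ne_zero⟩
    have h1 := v.intValuation_if_neg hn0
    rw [← v.valuation_of_algebraMap (K := K)] at h1
    change v.valuation K (algebraMap (𝓞 K) K n) = _ at h1
    rw [← hnK, val_eq] at h1
    have h2 := WithZero.exp_injective h1
    have h3 : (3 : ℤ) ∣ ordv v nK := by
      simp only [nK, ordv_mul, ordv_pow]
      exact dvd_add (h v) (Dvd.intro _ rfl)
    rw [h2, dvd_neg] at h3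
    convert Int.natCast_dvd_natCast.1 (by exact_mod_cast h3)
  obtain ⟨J, rfl⟩ := Associates.mk_surjective J
  rw [← Associates.mk_pow, Associates.mk_eq_mk_iff_associated, associated_iff_eq] at hJ
  obtain ⟨d, rfl⟩ := (hpid.principal J).principal
  change _ = Ideal.span {d} ^ 3 at hJ
  rw [Ideal.span_singleton_pow, Ideal.span_singleton_eq_span_singleton] at hJ
  obtain ⟨u, hu⟩ := hJ.symm
  refine ⟨u, algebraMap (𝓞 K) K d / algebraMap (𝓞 K) K b, ?_⟩
  have : (g : K) * (algebraMap (𝓞 K) K b) ^ 3 = algebraMap (𝓞 K) K d ^ 3 * algebraMap (𝓞 K) K u := by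
    rw [← map_pow _ d, ← map_mul, hu, ← hnK]
    simp [nK]
  field_simp
  linear_combination this

lemma ordv_of_curve (v : HeightOneSpectrum (𝓞 K)) {m : 𝓞 K} (hm : m ∉ v.asIdeal) {X Y : K}
    (h : Y ^ 2 + algebraMap (𝓞 K) K m * Y = X ^ 3) (hX : X ≠ 0) (g : Kˣ) (hg : (g : K) = Y) :
    (3 : ℤ) ∣ ordv v g := by
  have hm1 : v.valuation K (algebraMap (𝓞 K) K m) = 1 := v.valuation_eq_one_iff_notMem.2 hm
  have hY : Y ≠ 0 := hg ▸ g.ne_zero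
  have hYm : Y + algebraMap (𝓞 K) K m ≠ 0 := by
    intro h0
    have : X ^ 3 = 0 := by rw [← h]; linear_combination Y * h0
    exact hX (by simpa using this)
  let g2 := Units.mk0 _ hYm
  let gx := Units.mk0 _ hX
  have hmul : g * g2 = gx ^ 3 := by
    ext; simp [g2, gx, hg]; linear_combination h
  have h3 := congrArg (ordv v) hmul
  rw [ordv_mul, ordv_pow] at h3
  rcases lt_trichotomy (v.valuation K Y) 1 with hlt | heq | hgt
  · have h1 : v.valuation K (Y + algebraMap (𝓞 K) K m) = 1 := by
      rw [Valuation.map_add_eq_of_lt_right _ (by rwa [hm1]), hm1]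
    have : ordv v g2 = ordv v 1 := ordv_eq v (by simpa [g2] using h1)
    have h0 : ordv v 1 = 0 := by simp [ordv]
    exact ⟨ordv v gx, by push_cast at h3; linarith⟩
  · have : ordv v g = ordv v 1 := ordv_eq v (by simpa [hg] using heq)
    have h0 : ordv v 1 = 0 := by simp [ordv]
    rw [this, h0]; exact dvd_zero _
  · have h1 : v.valuation K (Y + algebraMap (𝓞 K) K m) = v.valuation K Y := by
      rw [Valuation.map_add_eq_of_lt_left _ (by rwa [hm1])]
    have : ordv v g2 = ordv v g := ordv_eq v (by simpa [g2, hg] using h1)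
    push_cast at h3
    omega

lemma finite_bad {m : 𝓞 K} (hm : m ≠ 0) :
    {v : HeightOneSpectrum (𝓞 K) | m ∈ v.asIdeal}.Finite := by
  have := Ideal.finite_factors (I := Ideal.span {m}) (by simpa using hm)
  refine this.subset fun v hv => ?_
  simpa [Ideal.dvd_span_singleton] using hv

/-- Bound on the number of primes dividing `m`. -/
lemma bad_bound (η : ℝ) (hη : 0 < η) : ∃ C : ℝ, 0 < C ∧ ∀ m : ℤ, ∀ hm : ((m : 𝓞 K)) ≠ 0,
    (3 : ℝ) ^ (finite_bad hm).toFinset.card ≤ C * |(m : ℝ)| ^ η := by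
  classical
  set d := Module.finrank ℚ K with hd
  have hd0 : (0 : ℝ) < d := by exact_mod_cast Module.finrank_pos
  set e := η / d with he
  have he0 : 0 < e := by positivity
  set N : ℕ := ⌈(3 : ℝ) ^ (1 / e)⌉₊ with hN
  have hfin : {v : HeightOneSpectrum (𝓞 K) | Ideal.absNorm v.asIdeal ≤ N}.Finite := by
    have := (Ideal.finite_setOfPred_absNorm_le (S := 𝓞 K) N)
    refine Set.Finite.of_finite_image (f := fun v => v.asIdeal) (this.subset ?_) ?_
    · rintro _ ⟨v, hv, rfl⟩; exact hv
    · intro v _ w _ h; exact HeightOneSpectrum.ext h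
  refine ⟨3 ^ hfin.toFinset.card, by positivity, fun m hm => ?_⟩
  set s := (finite_bad hm).toFinset with hs
  have hsm : ∀ v ∈ s, (m : 𝓞 K) ∈ v.asIdeal := fun v hv => by simpa [hs] using hv
  have hm0 : m ≠ 0 := by rintro rfl; simp at hm
  have hnpos : ∀ v : HeightOneSpectrum (𝓞 K), 1 ≤ Ideal.absNorm v.asIdeal := fun v =>
    Nat.one_le_iff_ne_zero.2 (by rw [Ne, Ideal.absNorm_eq_zero_iff]; exact v.ne_bot)
  have key : ∀ v : HeightOneSpectrum (𝓞 K),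
      (3 : ℝ) ≤ (if v ∈ hfin.toFinset then 3 else 1) * (Ideal.absNorm v.asIdeal : ℝ) ^ e := by
    intro v
    have h1 : (1 : ℝ) ≤ Ideal.absNorm v.asIdeal := by exact_mod_cast hnpos v
    split_ifs with h
    · have := Real.one_le_rpow h1 he0.le
      linarith
    · have h2 : N < Ideal.absNorm v.asIdeal := by simpa using h
      have h3 : (3 : ℝ) ^ (1 / e) ≤ Ideal.absNorm v.asIdeal :=
        (Nat.le_ceil _).trans (by exact_mod_cast h2.le)
      calc (3 : ℝ) = ((3 : ℝ) ^ (1 / e)) ^ e := by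
            rw [← Real.rpow_mul (by norm_num)]; field_simp; simp
        _ ≤ _ := by rw [one_mul]; gcongr
  have hdvd : (∏ v ∈ s, v.asIdeal) ∣ Ideal.span {(m : 𝓞 K)} := by
    have : (∏ I ∈ s.image (fun v => v.asIdeal), I) ∣ Ideal.span {(m : 𝓞 K)} := by
      refine Finset.prod_primes_dvd _ ?_ ?_
      · intro I hI
        obtain ⟨v, hv, rfl⟩ := Finset.mem_image.1 hI
        exact v.prime
      · intro I hI
        obtain ⟨v, hv, rfl⟩ := Finset.mem_image.1 hI
        rw [Ideal.dvd_span_singleton]; exact hsm v hv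
    rwa [Finset.prod_image] at this
    intro v _ w _ h; exact HeightOneSpectrum.ext h
  have hnorm : Ideal.absNorm (Ideal.span {(m : 𝓞 K)}) = m.natAbs ^ d := by
    rw [Ideal.absNorm_span_singleton]
    have := Algebra.norm_algebraMap (R := ℤ) (S := 𝓞 K) m
    rw [show (m : 𝓞 K) = algebraMap ℤ (𝓞 K) m by simp, this, Int.natAbs_pow, RingOfIntegers.rank]
  have hprod : (∏ v ∈ s, (Ideal.absNorm v.asIdeal : ℝ)) ≤ |(m : ℝ)| ^ d := by
    have h1 : ∏ v ∈ s, (Ideal.absNorm v.asIdeal) ∣ m.natAbs ^ d := by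
      rw [← hnorm, ← map_prod]
      exact map_dvd Ideal.absNorm hdvd
    have h2 := Nat.le_of_dvd (pow_pos (Int.natAbs_pos.2 hm0) _) h1
    have h3 : ((∏ v ∈ s, (Ideal.absNorm v.asIdeal) : ℕ) : ℝ) ≤ ((m.natAbs ^ d : ℕ) : ℝ) := by
      exact_mod_cast h2
    push_cast at h3
    rwa [Nat.cast_natAbs, Int.cast_abs] at h3
  calc (3 : ℝ) ^ s.card = ∏ v ∈ s, (3 : ℝ) := by simp
    _ ≤ ∏ v ∈ s, ((if v ∈ hfin.toFinset then 3 else 1) * (Ideal.absNorm v.asIdeal : ℝ) ^ e) :=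
        Finset.prod_le_prod (fun _ _ => by norm_num) fun v _ => key v
    _ = (∏ v ∈ s, (if v ∈ hfin.toFinset then (3 : ℝ) else 1)) *
          (∏ v ∈ s, (Ideal.absNorm v.asIdeal : ℝ)) ^ e := by
        rw [Finset.prod_mul_distrib, Real.finsetProd_rpow]
        intro v _; positivity
    _ ≤ 3 ^ hfin.toFinset.card * (|(m : ℝ)| ^ d) ^ e := by
        refine mul_le_mul ?_ (Real.rpow_le_rpow (Finset.prod_nonneg fun _ _ => Nat.cast_nonneg _)
          hprod he0.le) (Real.rpow_nonneg (Finset.prod_nonneg fun _ _ => Nat.cast_nonneg _) _)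
          (pow_nonneg (by norm_num) _)
        rw [← Finset.prod_filter, Finset.prod_const]
        refine pow_le_pow_right₀ (by norm_num) (Finset.card_le_card fun v hv => ?_)
        exact (Finset.mem_filter.1 hv).2
    _ = _ := by
        rw [← Real.rpow_natCast |(m : ℝ)|, ← Real.rpow_mul (abs_nonneg _), he]
        congr 2; field_simp

end Classes
end DCubic

namespace DCubic
open NumberField IsDedekindDomain WeierstrassCurve

section Descent
set_option linter.unusedSectionVars false

/-- iterated classes -/
lemma iter_class {G F : Type*} [AddCommGroup G] (φ : G →+ G) (κ : G → F)
    (hκ : ∀ P Q, κ P = κ Q → ∃ R, P - Q = φ R) (k : ℕ) :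
    ∃ κ' : G → (Fin k → F), ∀ P Q, κ' P = κ' Q → ∃ R, P - Q = φ^[k] R := by
  classical
  induction k with
  | zero => exact ⟨fun _ => Fin.elim0, fun P Q _ => ⟨P - Q, rfl⟩⟩
  | succ k ih =>
    obtain ⟨κ', h⟩ := ih
    have h1 : ∀ c : Fin k → F, ∃ r : G, ∀ P, κ' P = c → κ' r = c := by
      intro c
      by_cases hc : ∃ r, κ' r = c
      · obtain ⟨r, hr⟩ := hc
        exact ⟨r, fun _ _ => hr⟩
      · exact ⟨0, fun P hP => absurd ⟨P, hP⟩ hc⟩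
    choose r hr using h1
    have h2 : ∀ P, ∃ D, P - r (κ' P) = φ^[k] D := fun P => h _ _ (hr _ P rfl).symm
    choose D hD using h2
    refine ⟨fun P => Fin.cons (κ (D P)) (κ' P), fun P Q hPQ => ?_⟩
    obtain ⟨h3, h4⟩ := Fin.cons_inj.1 hPQ
    obtain ⟨R, hR⟩ := hκ _ _ h3
    refine ⟨R, ?_⟩
    have h5 : P - Q = φ^[k] (D P) - φ^[k] (D Q) := by
      rw [← hD, ← hD, h4]; abel
    rw [Function.iterate_succ_apply, ← hR, h5, iterate_map_sub]

variable {K : Type*} [Field K] [NumberField K] [DecidableEq K]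

/-- The finite set of classes. -/
abbrev Cls {m : ℤ} (hm : ((m : 𝓞 K)) ≠ 0) : Type _ :=
  Option (Option (Option (((finite_bad hm).toFinset → ZMod 3) × (𝓞 K)ˣ)))

lemma exists_kappa (hpid : IsPrincipalIdealRing (𝓞 K)) {m : ℤ} (hm : ((m : 𝓞 K)) ≠ 0)
    (hmK : ((m : K)) ≠ 0) {ω : K} (hω : ω ^ 3 = 1) (hω1 : ω ^ 2 + ω + 1 = 0) :
    ∃ κ : (Wc (m : K)).Point → Cls hm, ∀ P Q, κ P = κ Q → ∃ R, P - Q = phi hmK hω R := by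
  classical
  set s := (finite_bad hm).toFinset with hs
  let e : Kˣ → (s → ZMod 3) := fun g v => ((ordv v.1 g : ℤ) : ZMod 3)
  let IsY : Kˣ → Prop := fun g => ∃ X : K, X ≠ 0 ∧ (g : K) ^ 2 + m * g = X ^ 3
  have h1 : ∀ c : s → ZMod 3, ∃ r : Kˣ, ∀ g, IsY g → e g = c → IsY r ∧ e r = c := by
    intro c
    by_cases hc : ∃ r, IsY r ∧ e r = c
    · obtain ⟨r, hr⟩ := hc
      exact ⟨r, fun _ _ _ => hr⟩
    · exact ⟨1, fun P hP h => absurd ⟨P, hP, h⟩ hc⟩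
  choose r hr using h1
  have h2 : ∀ g : Kˣ, ∃ u : (𝓞 K)ˣ, IsY g → ∃ c : K, (g : K) = algebraMap (𝓞 K) K u * c ^ 3 * r (e g) := by
    intro g
    by_cases hg : IsY g
    · obtain ⟨hr1, hr2⟩ := hr _ g hg rfl
      obtain ⟨u, c, huc⟩ := cube_of_ordv hpid (g / r (e g)) (fun v => by
        by_cases hv : v ∈ s
        · have := congrFun hr2 ⟨v, hv⟩
          simp only [e] at this
          rw [ordv_div]
          rw [ZMod.intCast_eq_intCast_iff_dvd_sub] at this
          exact this
        · have hv' : (m : 𝓞 K) ∉ v.asIdeal := by simpa [hs] using hv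
          rw [ordv_div]
          obtain ⟨X, hX, h⟩ := hg
          obtain ⟨X', hX', h'⟩ := hr1
          exact dvd_sub (ordv_of_curve v hv' (X := X) (by simpa using h) hX g rfl)
            (ordv_of_curve v hv' (X := X') (by simpa using h') hX' _ rfl))
      refine ⟨u, fun _ => ⟨c, ?_⟩⟩
      rw [← huc]; simp
    · exact ⟨1, fun h => absurd h hg⟩
  choose u hu using h2
  let κ : (Wc (m : K)).Point → Cls hm := fun P => match P with
    | .zero => none
    | .some x y _ => if x = 0 then (if y = 0 then some none else some (some none)) else
        if hy : y = 0 then none else some (some (some (e (Units.mk0 y hy), u (Units.mk0 y hy))))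
  have hy0 : ∀ x y, (Wc (m : K)).Nonsingular x y → x ≠ 0 → y ≠ 0 := by
    rintro x y h hx rfl
    have := (ns_iff hmK _ _).1 h
    apply hx; simpa using this.symm
  refine ⟨κ, ?_⟩
  rintro (_ | ⟨x₁, y₁, h₁⟩) (_ | ⟨x₂, y₂, h₂⟩) h
  · exact ⟨0, by simp⟩
  · exfalso
    simp only [κ] at h
    split_ifs at h with ha hb hc <;> first | exact hy0 _ _ h₂ ha hc | simp at h
  · exfalso
    simp only [κ] at h
    split_ifs at h with ha hb hc <;> first | exact hy0 _ _ h₁ ha hc | simp at h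
  · by_cases hx₁ : x₁ = 0
    · subst hx₁
      by_cases hx₂ : x₂ = 0
      · subst hx₂
        have e₁ := (ns_iff hmK _ _).1 h₁
        have e₂ := (ns_iff hmK _ _).1 h₂
        have : y₁ = y₂ := by
          by_cases hy₁ : y₁ = 0 <;> by_cases hy₂ : y₂ = 0 <;> simp [κ, hy₁, hy₂] at h ⊢
          have a₁ : y₁ + m = 0 := (mul_eq_zero.1 (show y₁ * (y₁ + m) = 0 by
            linear_combination e₁)).resolve_left hy₁
          have a₂ : y₂ + m = 0 := (mul_eq_zero.1 (show y₂ * (y₂ + m) = 0 by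
            linear_combination e₂)).resolve_left hy₂
          linear_combination a₁ - a₂
        subst this
        exact ⟨0, by simp⟩
      · exfalso
        have := hy0 _ _ h₂ hx₂
        by_cases hy₁ : y₁ = 0 <;> simp [κ, hx₂, this, hy₁] at h
    · by_cases hx₂ : x₂ = 0
      · exfalso
        have := hy0 _ _ h₁ hx₁
        by_cases hy₁ : y₂ = 0 <;> simp [κ, hx₁, hx₂, this, hy₁] at h
      · have hy₁ := hy0 _ _ h₁ hx₁
        have hy₂ := hy0 _ _ h₂ hx₂
        simp only [κ, hx₁, hx₂, hy₁, hy₂, if_false, dite_false, Option.some.injEq,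
          Prod.mk.injEq] at h
        obtain ⟨he, hu'⟩ := h
        obtain ⟨c₁, hc₁⟩ := hu (Units.mk0 y₁ hy₁) ⟨x₁, hx₁, (ns_iff hmK _ _).1 h₁⟩
        obtain ⟨c₂, hc₂⟩ := hu (Units.mk0 y₂ hy₂) ⟨x₂, hx₂, (ns_iff hmK _ _).1 h₂⟩
        rw [he, hu'] at hc₁
        simp only [Units.val_mk0] at hc₁ hc₂
        have hc₂0 : c₂ ≠ 0 := by
          rintro rfl
          apply hy₂; rw [hc₂]; simp
        refine same_class hmK hω hω1 h₁ h₂ hx₁ hx₂ (t := c₁ / c₂) ?_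
        rw [hc₁]
        conv_rhs => rw [hc₂]
        field_simp

variable {σ : K →+* ℂ} {w : 𝓞 K}

lemma Hle_one : Hle σ (1 : K) 1 := ⟨1, 1, by simp, by simp, by simp [nrm], by simp [nrm]⟩

lemma height_third (hg : Good σ w) {f g r : K} {A : ℝ} (hA : 1 ≤ A) (hf : Hle σ f A)
    (hgA : Hle σ g A) (hf0 : f ≠ 0) (hf1 : f + 1 ≠ 0) (hg0 : g ≠ 0) (hr1 : r ≠ 1)
    (hr : r ^ 3 = g * (g + 1) / (f * (f + 1))) :
    Hle σ ((f - (f - g) / (1 - r)) ^ 3 / (f * g)) (2 ^ 15 * A ^ 23) := by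
  have h1 : Hle σ (f + 1) (2 * (A * 1)) := hf.add Hle_one
  have h2 : Hle σ (g + 1) (2 * (A * 1)) := hgA.add Hle_one
  have h3 := (hgA.mul h2).mul ((hf.mul h1).inv (mul_ne_zero hf0 hf1))
  rw [← div_eq_mul_inv, ← hr] at h3
  have h4 := (Hle_one.sub (h3.cbrt hg)).inv (sub_ne_zero.2 hr1.symm)
  have h5 := hf.sub ((hf.sub hgA).mul h4)
  have h6 := (h5.mul (h5.mul h5)).mul ((hf.mul hgA).inv (mul_ne_zero hf0 hg0))
  rw [div_eq_mul_inv, pow_succ', pow_two, div_eq_mul_inv (f - g)]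
  exact h6.mono (le_of_eq (by ring))

lemma point_diff (hg : Good σ w) {m : K} (hm : m ≠ 0) {x₁ y₁ x₂ y₂ : K}
    (h₁ : (Wc m).Nonsingular x₁ y₁) (h₂ : (Wc m).Nonsingular x₂ y₂) (hx₁ : x₁ ≠ 0) (hx₂ : x₂ ≠ 0)
    (hx : x₁ ≠ x₂) {A : ℝ} (hA : 1 ≤ A) (hf₁ : Hle σ (y₁ / m) A) (hf₂ : Hle σ (y₂ / m) A) :
    ∃ x y h, Affine.Point.some x₂ y₂ h₂ - Affine.Point.some x₁ y₁ h₁ = Affine.Point.some x y h ∧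
      Hle σ (y / m) (2 ^ 38 * A ^ 23) := by
  have e₁ := (ns_iff hm _ _).1 h₁
  have e₂ := (ns_iff hm _ _).1 h₂
  have h₂' : (Wc m).Nonsingular x₂ (-m - y₂) := (ns_iff hm _ _).2 (by linear_combination e₂)
  obtain ⟨h, hh⟩ := chord h₁ h₂' hx
  refine ⟨_, _, h, ?_, ?_⟩
  · rw [← hh, sub_eq_add_neg]
    have : -(Affine.Point.some x₂ y₂ h₂ : (Wc m).Point) = .some x₂ (-m - y₂) h₂' := by
      rw [Affine.Point.neg_some]
      simp [Affine.negY, Wc]; ring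
    rw [← this]; abel
  · have hprod := (chord_prod e₁ ((ns_iff hm _ _).1 h₂') hx
      (div_mul_cancel₀ _ (sub_ne_zero.2 hx)) rfl rfl rfl).1
    have hy₁ : y₁ ≠ 0 := by rintro rfl; apply hx₁; simpa using e₁.symm
    have hy₁m : y₁ + m ≠ 0 := by
      intro h0; apply hx₁
      have : x₁ ^ 3 = 0 := by rw [← e₁]; linear_combination y₁ * h0
      simpa using this
    have hy₂m : -m - y₂ ≠ 0 := by
      intro h0; apply hx₂
      have : x₂ ^ 3 = 0 := by rw [← e₂]; linear_combination -y₂ * h0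
      simpa using this
    have hx0 : x₁ - x₂ ≠ 0 := sub_ne_zero.2 hx
    have a1 : Hle σ (y₁ / m) (2 * A) := hf₁.mono (by linarith)
    have a2 : Hle σ (-1 - y₂ / m) (2 * A) := (Hle_one.neg.sub hf₂).mono (by linarith)
    have := height_third hg (r := x₂ / x₁) (by linarith) a1 a2 (div_ne_zero hy₁ hm)
      (by rw [div_add_one hm]; exact div_ne_zero hy₁m hm)
      (by rw [show -1 - y₂ / m = (-m - y₂) / m by field_simp]; exact div_ne_zero hy₂m hm)
      (by rw [Ne, div_eq_one_iff_eq hx₁]; exact hx.symm)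
      (by
        have h0 : y₁ / m + 1 ≠ 0 := by rw [div_add_one hm]; exact div_ne_zero hy₁m hm
        rw [div_pow, ← e₁, ← e₂]
        field_simp
        ring)
    convert this.mono (le_of_eq _) using 1
    · generalize hY : (y₁ - (-m - y₂)) / (x₁ - x₂) * _ + _ = Y at hprod ⊢
      have hh2 : y₁ / m - (y₁ / m - (-1 - y₂ / m)) / (1 - x₂ / x₁)
          = (y₁ - (y₁ - (-m - y₂)) / (x₁ - x₂) * x₁) / m := by
        have : 1 - x₂ / x₁ ≠ 0 := by
          rw [one_sub_div hx₁]; exact div_ne_zero hx0 hx₁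
        field_simp
      rw [hh2, div_pow, ← hprod]
      rw [show -1 - y₂ / m = (-m - y₂) / m by field_simp]
      field_simp
    · ring

end Descent
end DCubic

namespace DCubic
open NumberField IsDedekindDomain WeierstrassCurve

section Count
set_option linter.unusedSectionVars false
variable {K : Type*} [Field K] [NumberField K] [DecidableEq K] {σ : K →+* ℂ} {w : 𝓞 K}

lemma om1 (hg : Good σ w) : (algebraMap (𝓞 K) K w) ^ 2 + algebraMap (𝓞 K) K w + 1 = 0 := by
  have := congrArg (algebraMap (𝓞 K) K) hg.sq
  simpa using this

lemma om3 (hg : Good σ w) : (algebraMap (𝓞 K) K w) ^ 3 = 1 := by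
  linear_combination (algebraMap (𝓞 K) K w - 1) * om1 hg

lemma iter_height (hg : Good σ w) {m : K} (hm : m ≠ 0) {T : ℝ} (hT : 0 ≤ T) (k : ℕ) :
    ∀ (R : (Wc m).Point) (x y : K) (h : (Wc m).Nonsingular x y),
      (phi hm (om3 hg))^[k] R = .some x y h → Hle σ (y / m) T →
      ∃ x' y' h', R = .some x' y' h' ∧ Hle σ (y' / m) (18 * T ^ ((1 / 3 : ℝ) ^ k)) := by
  induction k with
  | zero =>
    intro R x y h hR hH
    exact ⟨x, y, h, hR, hH.mono (by simp; linarith)⟩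
  | succ k ih =>
    intro R x y h hR hH
    rw [Function.iterate_succ_apply] at hR
    obtain ⟨x', y', h', hR', hH'⟩ := ih _ x y h hR hH
    rcases R with _ | ⟨x₀, y₀, h₀⟩
    · exfalso
      have h0 : phi hm (om3 hg) (Affine.Point.zero) = 0 := map_zero _
      rw [h0] at hR'
      exact absurd hR'.symm (Affine.Point.some_ne_zero _)
    · have hx₀ : x₀ ≠ 0 := by
        rintro rfl
        rw [phi_zero_x] at hR'
        exact absurd hR'.symm (Affine.Point.some_ne_zero _)
      refine ⟨x₀, y₀, h₀, rfl, ?_⟩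
      obtain ⟨h'', hp⟩ := phi_some hm (om3 hg) (om1 hg) h₀ hx₀
      rw [hp] at hR'
      have e₀ := (ns_iff hm _ _).1 h₀
      rw [Affine.Point.some.injEq] at hR'
      have hy' := hR'.2
      have hy₀ : y₀ ≠ 0 := by rintro rfl; apply hx₀; simpa using e₀.symm
      have hy₀m : y₀ + m ≠ 0 := by
        intro h0; apply hx₀
        have : x₀ ^ 3 = 0 := by rw [← e₀]; linear_combination y₀ * h0
        simpa using this
      have hf1 : y₀ / m + 1 ≠ 0 := by rw [div_add_one hm]; exact div_ne_zero hy₀m hm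
      have key : y' / m = (y₀ / m - algebraMap (𝓞 K) K w) ^ 3 /
          (3 * (algebraMap (𝓞 K) K w - (algebraMap (𝓞 K) K w) ^ 2) * (y₀ / m * (y₀ / m + 1))) := by
        rw [← hy', ← e₀]
        by_cases hth : 3 * (algebraMap (𝓞 K) K w - (algebraMap (𝓞 K) K w) ^ 2) = 0
        · simp [hth]
        · rw [show y₀ / m - algebraMap (𝓞 K) K w = (y₀ - algebraMap (𝓞 K) K w * m) / m by field_simp,
            div_add_one hm, show y₀ ^ 2 + m * y₀ = y₀ * (y₀ + m) by ring]
          generalize 3 * (algebraMap (𝓞 K) K w - (algebraMap (𝓞 K) K w) ^ 2) = th at hth ⊢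
          field_simp
      rw [key] at hH'
      have hS : 0 ≤ 6 * T ^ ((1 / 3 : ℝ) ^ (k + 1)) := by positivity
      have := Hle.phi hg rfl (div_ne_zero hy₀ hm) hf1 hH' hS (by
        rw [mul_pow, ← Real.rpow_natCast (T ^ ((1 / 3 : ℝ) ^ (k + 1))), ← Real.rpow_mul hT]
        rw [show (1 / 3 : ℝ) ^ (k + 1) * ((3 : ℕ) : ℝ) = (1 / 3) ^ k by push_cast; ring]
        linarith)
      exact this.mono (by linarith)

lemma count_points (hg : Good σ w) {m : K} (hm : m ≠ 0) {T : ℝ} (hT : 1 ≤ T) :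
    ∃ s : Finset (Wc m).Point, (∀ x y h, Hle σ (y / m) T → Affine.Point.some x y h ∈ s) ∧
      (s.card : ℝ) ≤ 1875 * T ^ 4 := by
  classical
  obtain ⟨t, ht, hc⟩ := count_Hle hg hT
  let s : Finset (K × K) := t.biUnion fun f =>
    ((Polynomial.nthRoots 3 ((f * m) ^ 2 + m * (f * m))).toFinset).image fun x => (x, f * m)
  let g : K × K → (Wc m).Point := fun p =>
    if h : (Wc m).Nonsingular p.1 p.2 then .some p.1 p.2 h else 0
  refine ⟨s.image g, fun x y h hH => ?_, ?_⟩
  · refine Finset.mem_image.2 ⟨(x, y), ?_, by simp [g, h]⟩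
    refine Finset.mem_biUnion.2 ⟨y / m, ht _ hH, Finset.mem_image.2 ⟨x, ?_, ?_⟩⟩
    · rw [Multiset.mem_toFinset, Polynomial.mem_nthRoots (by norm_num), div_mul_cancel₀ _ hm]
      exact ((ns_iff hm _ _).1 h).symm
    · rw [div_mul_cancel₀ _ hm]
  · have h1 : (s.image g).card ≤ t.card * 3 := by
      refine Finset.card_image_le.trans (Finset.card_biUnion_le_card_mul _ _ _ fun f _ => ?_)
      exact Finset.card_image_le.trans ((Multiset.toFinset_card_le _).trans
        (Polynomial.card_nthRoots _ _))
    have h2 : ((s.image g).card : ℝ) ≤ t.card * 3 := by exact_mod_cast h1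
    linarith

/-- Main count on the curve. -/
lemma main_count (hg : Good σ w) [Fintype (𝓞 K)ˣ] {m : ℤ} (hm : ((m : 𝓞 K)) ≠ 0)
    (hmK : ((m : K)) ≠ 0) {A : ℝ} (hA : 1 ≤ A) (k : ℕ) (S : Finset (Wc (m : K)).Point)
    (hS : ∀ P ∈ S, ∃ x y h, P = .some x y h ∧ x ≠ 0 ∧ Hle σ (y / m) A) :
    (S.card : ℝ) ≤ (((3 + Fintype.card (𝓞 K)ˣ) * 3 ^ (finite_bad hm).toFinset.card : ℕ) : ℝ) ^ k *
      (2 + 1875 * (18 * (2 ^ 38 * A ^ 23 : ℝ) ^ ((1 / 3 : ℝ) ^ k)) ^ 4) := by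
  classical
  obtain ⟨κ, hκ⟩ := exists_kappa hg.pid hm hmK (om3 hg) (om1 hg)
  obtain ⟨κ', hκ'⟩ := iter_class _ κ hκ k
  set T : ℝ := 2 ^ 38 * A ^ 23 with hTdef
  have hT1 : 1 ≤ T := by
    have : 1 ≤ A ^ 23 := one_le_pow₀ hA
    rw [hTdef]; linarith
  have hT' : 1 ≤ 18 * T ^ ((1 / 3 : ℝ) ^ k) := by
    have := Real.one_le_rpow hT1 (z := (1 / 3 : ℝ) ^ k) (by positivity)
    linarith
  obtain ⟨s, hs, hsc⟩ := count_points hg hmK hT'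
  have hfib : ∀ c, (S.filter fun P => κ' P = c).card ≤ 2 + s.card := by
    intro c
    by_cases hne : ∃ Q ∈ S, κ' Q = c
    · obtain ⟨Q, hQ, hQc⟩ := hne
      have hsub : ∀ P ∈ (S.filter fun P => κ' P = c) \ {Q, -Q}, ∃ R ∈ s,
          Q - P = (phi hmK (om3 hg))^[k] R := by
        intro P hP
        simp only [Finset.mem_sdiff, Finset.mem_filter, Finset.mem_insert,
          Finset.mem_singleton, not_or] at hP
        obtain ⟨⟨hPS, hPc⟩, hPQ, hPnQ⟩ := hP
        obtain ⟨R, hR⟩ := hκ' Q P (hQc.trans hPc.symm)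
        refine ⟨R, ?_, hR⟩
        obtain ⟨x₂, y₂, h₂, rfl, hx₂, hH₂⟩ := hS Q hQ
        obtain ⟨x₁, y₁, h₁, rfl, hx₁, hH₁⟩ := hS P hPS
        have hx : x₁ ≠ x₂ := by
          rintro rfl
          have e₁ := (ns_iff hmK _ _).1 h₁
          have e₂ := (ns_iff hmK _ _).1 h₂
          have : (y₁ - y₂) * (y₁ + m + y₂) = 0 := by linear_combination e₁ - e₂
          rcases mul_eq_zero.1 this with h0 | h0
          · obtain rfl := sub_eq_zero.1 h0
            exact hPQ rfl
          · apply hPnQ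
            rw [Affine.Point.neg_some]
            have : y₁ = (Wc (m : K)).negY x₁ y₂ := by
              simp [Affine.negY, Wc]; linear_combination h0
            subst this; rfl
        obtain ⟨x, y, h, hd, hH⟩ := point_diff hg hmK h₁ h₂ hx₁ hx₂ hx hA hH₁ hH₂
        rw [hd] at hR
        obtain ⟨x', y', h', rfl, hH'⟩ := iter_height hg hmK (by linarith) k R x y h hR.symm hH
        exact hs _ _ _ hH'
      choose! r hr hr2 using hsub
      have h1 : ((S.filter fun P => κ' P = c) \ {Q, -Q}).card ≤ s.card := by
        refine Finset.card_le_card_of_injOn r (fun P hP => hr P hP) ?_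
        intro P hP P' hP' hPP
        have a1 := hr2 P hP
        have a2 := hr2 P' hP'
        rw [hPP, ← a2] at a1
        exact sub_right_injective a1
      have h2 := Finset.card_le_card_sdiff_add_card (t := ({Q, -Q} : Finset _))
        (s := S.filter fun P => κ' P = c)
      have h3 : ({Q, -Q} : Finset (Wc (m : K)).Point).card ≤ 2 := Finset.card_le_two
      omega
    · rw [Finset.filter_eq_empty_iff.2]
      · simp
      · intro P hP h; exact hne ⟨P, hP, h⟩
  have hcard : Fintype.card (Fin k → Cls hm) ≤
      ((3 + Fintype.card (𝓞 K)ˣ) * 3 ^ (finite_bad hm).toFinset.card) ^ k := by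
    rw [Fintype.card_fun, Fintype.card_fin]
    refine Nat.pow_le_pow_left ?_ k
    simp only [Fintype.card_option, Fintype.card_prod, Fintype.card_fun, ZMod.card,
      Fintype.card_coe]
    have : 1 ≤ 3 ^ (finite_bad hm).toFinset.card := Nat.one_le_pow _ _ (by norm_num)
    nlinarith
  have hSc : S.card ≤ Fintype.card (Fin k → Cls hm) * (2 + s.card) := by
    rw [Finset.card_eq_sum_card_fiberwise (f := κ') (t := Finset.univ) (fun _ _ => by simp)]
    refine (Finset.sum_le_card_nsmul _ _ (2 + s.card) fun c _ => hfib c).trans ?_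
    simp
  have h4 := hSc.trans (Nat.mul_le_mul_right _ hcard)
  have h5 : (S.card : ℝ) ≤ (((3 + Fintype.card (𝓞 K)ˣ) * 3 ^ (finite_bad hm).toFinset.card : ℕ) : ℝ) ^ k
      * (2 + s.card) := by exact_mod_cast h4
  refine h5.trans ?_
  gcongr

end Count
end DCubic

namespace DCubic
open NumberField IsDedekindDomain WeierstrassCurve

section Red
set_option linter.unusedSectionVars false

/-- the solution set -/
def Sol (a b c : ℤ) (B : ℝ) : Set (ℤ × ℤ × ℤ) :=
  {t : ℤ × ℤ × ℤ |
          a * t.1 ^ 3 + b * t.2.1 ^ 3 + c * t.2.2 ^ 3 = 0 ∧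
          Int.gcd t.1 (Int.gcd t.2.1 t.2.2) = 1 ∧
          (|t.1| : ℝ) ≤ B ∧ (|t.2.1| : ℝ) ≤ B ∧ (|t.2.2| : ℝ) ≤ B}

lemma box_finite (B : ℝ) : {t : ℤ × ℤ × ℤ | (|t.1| : ℝ) ≤ B ∧ (|t.2.1| : ℝ) ≤ B ∧
    (|t.2.2| : ℝ) ≤ B}.Finite := by
  have h : ({n : ℤ | (|n| : ℝ) ≤ B}).Finite := by
    refine (Set.finite_Icc (-⌊B⌋) ⌊B⌋).subset fun n hn => ?_
    have hn' : (|n| : ℝ) ≤ B := hn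
    rw [← Int.cast_abs] at hn'
    have := Int.le_floor.2 hn'
    exact ⟨by linarith [neg_abs_le n], (le_abs_self n).trans this⟩
  refine (h.prod (h.prod h)).subset ?_
  rintro ⟨x, y, z⟩ ⟨h1, h2, h3⟩
  exact ⟨h1, h2, h3⟩

lemma Sol_finite (a b c : ℤ) (B : ℝ) : (Sol a b c B).Finite :=
  (box_finite B).subset fun _ ht => ht.2.2

lemma prim_pm {x y z x' y' z' : ℤ} (h : Int.gcd x (Int.gcd y z) = 1)
    (h' : Int.gcd x' (Int.gcd y' z') = 1) (h1 : x * y' = x' * y) (h2 : x * z' = x' * z)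
    (h3 : y * z' = y' * z) :
    ((x', y', z') : ℤ × ℤ × ℤ) = (x, y, z) ∨ ((x', y', z') : ℤ × ℤ × ℤ) = -(x, y, z) := by
  obtain ⟨u, v, w, huvw⟩ : ∃ u v w : ℤ, u * x + v * y + w * z = 1 := by
    have e1 := Int.gcd_eq_gcd_ab y z
    have e2 := Int.gcd_eq_gcd_ab x (Int.gcd y z)
    rw [h, e1] at e2
    generalize Int.gcdA x _ = p at e2
    generalize Int.gcdB x _ = q at e2
    exact ⟨p, q * Int.gcdA y z, q * Int.gcdB y z, by push_cast at e2; linear_combination -e2⟩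
  set l := u * x' + v * y' + w * z' with hl
  have ex : x' = l * x := by rw [hl]; linear_combination -x' * huvw - v * h1 - w * h2
  have ey : y' = l * y := by rw [hl]; linear_combination -y' * huvw + u * h1 - w * h3
  have ez : z' = l * z := by rw [hl]; linear_combination -z' * huvw + u * h2 + v * h3
  have hd : l ∣ ((Int.gcd x' (Int.gcd y' z') : ℕ) : ℤ) :=
    Int.dvd_coe_gcd ⟨x, ex⟩ (Int.dvd_coe_gcd ⟨y, ey⟩ ⟨z, ez⟩)
  rw [h'] at hd
  rcases Int.isUnit_iff.1 (isUnit_of_dvd_one (by exact_mod_cast hd)) with h0 | h0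
  · left; rw [ex, ey, ez, h0]; simp
  · right; rw [ex, ey, ez, h0]; simp

lemma cube_inj {p q : ℤ} (h : p ^ 3 = q ^ 3) : p = q :=
  (Odd.strictMono_pow (by decide : Odd 3)).injective h

lemma prim_pm_cube {x y z x' y' z' : ℤ} (h : Int.gcd x (Int.gcd y z) = 1)
    (h' : Int.gcd x' (Int.gcd y' z') = 1) (h1 : x ^ 3 * y' ^ 3 = x' ^ 3 * y ^ 3)
    (h2 : x ^ 3 * z' ^ 3 = x' ^ 3 * z ^ 3)
    (h3 : y ^ 3 * z' ^ 3 = y' ^ 3 * z ^ 3) :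
    ((x', y', z') : ℤ × ℤ × ℤ) = (x, y, z) ∨ ((x', y', z') : ℤ × ℤ × ℤ) = -(x, y, z) :=
  prim_pm h h' (cube_inj (by linear_combination h1)) (cube_inj (by linear_combination h2))
    (cube_inj (by linear_combination h3))

lemma pm_card {V : Set (ℤ × ℤ × ℤ)} (h : ∀ t ∈ V, ∀ t' ∈ V, t' = t ∨ t' = -t) : V.ncard ≤ 2 := by
  rcases V.eq_empty_or_nonempty with rfl | ⟨t, ht⟩
  · simp
  · refine (Set.ncard_le_ncard (t := {t, -t}) (fun t' ht' => ?_) (by simp)).trans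
      ((Set.ncard_insert_le _ _).trans (by simp))
    simpa using h t ht t' ht'

lemma zero_card {a b c : ℤ} (ha : a ≠ 0) (hb : b ≠ 0) (hc : c ≠ 0) (B : ℝ) :
    {t ∈ Sol a b c B | t.1 = 0 ∨ t.2.1 = 0 ∨ t.2.2 = 0}.ncard ≤ 6 := by
  have h1 : {t ∈ Sol a b c B | t.1 = 0}.ncard ≤ 2 := by
    refine pm_card ?_
    rintro ⟨x, y, z⟩ ⟨⟨h, hg, -⟩, h0⟩ ⟨x', y', z'⟩ ⟨⟨h', hg', -⟩, h0'⟩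
    simp only at *
    subst h0 h0'
    refine prim_pm_cube hg hg' (by ring) (by ring) (mul_left_cancel₀ hb ?_)
    linear_combination z' ^ 3 * h - z ^ 3 * h'
  have h2 : {t ∈ Sol a b c B | t.2.1 = 0}.ncard ≤ 2 := by
    refine pm_card ?_
    rintro ⟨x, y, z⟩ ⟨⟨h, hg, -⟩, h0⟩ ⟨x', y', z'⟩ ⟨⟨h', hg', -⟩, h0'⟩
    simp only at *
    subst h0 h0'
    refine prim_pm_cube hg hg' (by ring) (mul_left_cancel₀ ha ?_) (by ring)
    linear_combination z' ^ 3 * h - z ^ 3 * h'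
  have h3 : {t ∈ Sol a b c B | t.2.2 = 0}.ncard ≤ 2 := by
    refine pm_card ?_
    rintro ⟨x, y, z⟩ ⟨⟨h, hg, -⟩, h0⟩ ⟨x', y', z'⟩ ⟨⟨h', hg', -⟩, h0'⟩
    simp only at *
    subst h0 h0'
    refine prim_pm_cube hg hg' (mul_left_cancel₀ ha ?_) (by ring) (by ring)
    linear_combination y' ^ 3 * h - y ^ 3 * h'
  have : {t ∈ Sol a b c B | t.1 = 0 ∨ t.2.1 = 0 ∨ t.2.2 = 0} =
      {t ∈ Sol a b c B | t.1 = 0} ∪ ({t ∈ Sol a b c B | t.2.1 = 0} ∪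
        {t ∈ Sol a b c B | t.2.2 = 0}) := by
    ext t; simp only [Set.mem_ofPred_eq, Set.mem_union]; tauto
  rw [this]
  have u1 := Set.ncard_union_le {t ∈ Sol a b c B | t.1 = 0} ({t ∈ Sol a b c B | t.2.1 = 0} ∪
        {t ∈ Sol a b c B | t.2.2 = 0})
  have u2 := Set.ncard_union_le {t ∈ Sol a b c B | t.2.1 = 0} {t ∈ Sol a b c B | t.2.2 = 0}
  omega

lemma cube_bound {B : ℝ} {x y z w : ℤ} (hx : (|x| : ℝ) ≤ B) (hy : (|y| : ℝ) ≤ B)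
    (hz : (|z| : ℝ) ≤ B) (hw : (|w| : ℝ) ≤ B) :
    |((x ^ 3 * y ^ 3 - z ^ 3 * w ^ 3 : ℤ) : ℝ)| ≤ 2 * B ^ 6 := by
  push_cast
  refine (abs_sub _ _).trans ?_
  rw [abs_mul, abs_mul, abs_pow, abs_pow, abs_pow, abs_pow]
  have : 0 ≤ B := (abs_nonneg _).trans hx
  have h1 : |(x : ℝ)| ^ 3 * |(y : ℝ)| ^ 3 ≤ B ^ 3 * B ^ 3 := by gcongr
  have h2 : |(z : ℝ)| ^ 3 * |(w : ℝ)| ^ 3 ≤ B ^ 3 * B ^ 3 := by gcongr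
  nlinarith

lemma reduce {a b c : ℤ} (ha : a ≠ 0) (hb : b ≠ 0) (hc : c ≠ 0) (B : ℝ) :
    (Sol a b c B).ncard ≤ 2 ∨ ∃ a' b' c' : ℤ, a' ≠ 0 ∧ b' ≠ 0 ∧ c' ≠ 0 ∧
      |(a' : ℝ)| ≤ 2 * B ^ 6 ∧ |(b' : ℝ)| ≤ 2 * B ^ 6 ∧ |(c' : ℝ)| ≤ 2 * B ^ 6 ∧
      Sol a b c B ⊆ Sol a' b' c' B := by
  by_cases hall : ∀ t ∈ Sol a b c B, ∀ t' ∈ Sol a b c B, t' = t ∨ t' = -t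
  · exact Or.inl (pm_card hall)
  right
  push Not at hall
  obtain ⟨⟨x, y, z⟩, ⟨h, hg, b1, b2, b3⟩, ⟨x', y', z'⟩, ⟨h', hg', b1', b2', b3'⟩, hne⟩ := hall
  simp only at h hg b1 b2 b3 h' hg' b1' b2' b3'
  set A := y ^ 3 * z' ^ 3 - z ^ 3 * y' ^ 3 with hA
  set D := z ^ 3 * x' ^ 3 - x ^ 3 * z' ^ 3 with hD
  set E := x ^ 3 * y' ^ 3 - y ^ 3 * x' ^ 3 with hE
  have e1 : a * D = b * A := by rw [hA, hD]; linear_combination z ^ 3 * h' - z' ^ 3 * h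
  have e2 : a * E = c * A := by rw [hA, hE]; linear_combination y' ^ 3 * h - y ^ 3 * h'
  have e3 : b * E = c * D := by rw [hD, hE]; linear_combination x ^ 3 * h' - x' ^ 3 * h
  have hnz : ¬ (A = 0 ∧ D = 0 ∧ E = 0) := by
    rintro ⟨h1, h2, h3⟩
    have := prim_pm_cube hg hg' (by linear_combination h3) (by linear_combination -h2)
      (by linear_combination h1)
    rcases this with h0 | h0
    · exact hne.1 h0
    · exact hne.2 h0
  have hA0 : A ≠ 0 := by
    intro h0
    rw [h0, mul_zero] at e1 e2
    exact hnz ⟨h0, (mul_eq_zero.1 e1).resolve_left ha, (mul_eq_zero.1 e2).resolve_left ha⟩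
  have hD0 : D ≠ 0 := by
    intro h0
    rw [h0, mul_zero] at e1
    exact hA0 ((mul_eq_zero.1 e1.symm).resolve_left hb)
  have hE0 : E ≠ 0 := by
    intro h0
    rw [h0, mul_zero] at e2
    exact hA0 ((mul_eq_zero.1 e2.symm).resolve_left hc)
  refine ⟨A, D, E, hA0, hD0, hE0, cube_bound b2 b3' b3 b2', cube_bound b3 b1' b1 b3',
    cube_bound b1 b2' b2 b1', ?_⟩
  rintro ⟨u, v, w⟩ ⟨h0, hr⟩
  refine ⟨mul_left_cancel₀ ha ?_, hr⟩
  simp only at h0 ⊢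
  linear_combination A * h0 + v ^ 3 * e1 + w ^ 3 * e2

variable {K : Type*} [Field K] [NumberField K] [DecidableEq K] {σ : K →+* ℂ} {w : 𝓞 K}

lemma curve_count (hg : Good σ w) [Fintype (𝓞 K)ˣ] {a b c : ℤ} (ha : a ≠ 0) (hb : b ≠ 0)
    (hc : c ≠ 0) {B : ℝ} (hB : 2 ≤ B) (ha' : |(a : ℝ)| ≤ 2 * B ^ 6)
    (hc' : |(c : ℝ)| ≤ 2 * B ^ 6) (hm : (((a * b * c : ℤ)) : 𝓞 K) ≠ 0) (k : ℕ) :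
    ((Sol a b c B).ncard : ℝ) ≤
      6 + 2 * ((((3 + Fintype.card (𝓞 K)ˣ) * 3 ^ (finite_bad hm).toFinset.card : ℕ) : ℝ) ^ k *
      (2 + 1875 * (18 * (2 ^ 38 * (2 * B ^ 9) ^ 23 : ℝ) ^ ((1 / 3 : ℝ) ^ k)) ^ 4)) := by
  classical
  have hmZ : a * b * c ≠ 0 := mul_ne_zero (mul_ne_zero ha hb) hc
  have hmK : (((a * b * c : ℤ)) : K) ≠ 0 := by exact_mod_cast hmZ
  have haK : (a : K) ≠ 0 := by exact_mod_cast ha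
  have hbK : (b : K) ≠ 0 := by exact_mod_cast hb
  have hcK : (c : K) ≠ 0 := by exact_mod_cast hc
  set N : Set (ℤ × ℤ × ℤ) := {t ∈ Sol a b c B | ¬ (t.1 = 0 ∨ t.2.1 = 0 ∨ t.2.2 = 0)} with hN
  have hNf : N.Finite := (Sol_finite a b c B).subset fun t ht => ht.1
  have hNS : (Sol a b c B).ncard ≤ 6 + N.ncard := by
    have h1 := zero_card ha hb hc B
    have h2 : Sol a b c B = {t ∈ Sol a b c B | t.1 = 0 ∨ t.2.1 = 0 ∨ t.2.2 = 0} ∪ N := by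
      ext t; simp only [hN, Set.mem_ofPred_eq, Set.mem_union]; tauto
    have h3 := Set.ncard_union_le {t ∈ Sol a b c B | t.1 = 0 ∨ t.2.1 = 0 ∨ t.2.2 = 0} N
    rw [← h2] at h3
    omega
  let X : ℤ × ℤ × ℤ → K := fun t => -(a * b * (t.1 * t.2.1)) / t.2.2 ^ 2
  let Y : ℤ × ℤ × ℤ → K := fun t => a ^ 2 * b * t.1 ^ 3 / t.2.2 ^ 3
  let ψ : ℤ × ℤ × ℤ → (Wc ((a * b * c : ℤ) : K)).Point := fun t =>
    if h : (Wc ((a * b * c : ℤ) : K)).Nonsingular (X t) (Y t) then .some (X t) (Y t) h else 0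
  have hns : ∀ t ∈ N, (Wc ((a * b * c : ℤ) : K)).Nonsingular (X t) (Y t) := by
    rintro ⟨x, y, z⟩ ⟨⟨h, -⟩, h0⟩
    simp only [not_or] at h h0
    obtain ⟨hx, hy, hz⟩ := h0
    have hzK : (z : K) ≠ 0 := by exact_mod_cast hz
    have hK : (a : K) * x ^ 3 + b * y ^ 3 + c * z ^ 3 = 0 := by exact_mod_cast h
    rw [ns_iff hmK]
    simp only [X, Y]
    push_cast
    field_simp
    linear_combination hK
  set S : Finset (Wc ((a * b * c : ℤ) : K)).Point := hNf.toFinset.image ψ with hS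
  have hcardN : hNf.toFinset.card ≤ 2 * S.card := by
    refine Finset.card_le_mul_card_image _ 2 ?_
    intro P _
    rw [← Set.ncard_coe_finset]
    refine pm_card ?_
    intro t ht t' ht'
    simp only [Finset.coe_filter, Set.Finite.mem_toFinset, Set.mem_ofPred_eq] at ht ht'
    obtain ⟨htN, hP⟩ := ht
    obtain ⟨htN', hP'⟩ := ht'
    have n1 := hns t htN
    have n2 := hns t' htN'
    rw [← hP'] at hP
    simp only [ψ, n1, n2, dif_pos] at hP
    rw [Affine.Point.some.injEq] at hP
    obtain ⟨x, y, z⟩ := t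
    obtain ⟨x', y', z'⟩ := t'
    obtain ⟨⟨-, hg1, -⟩, h0⟩ := htN
    obtain ⟨⟨-, hg2, -⟩, h0'⟩ := htN'
    simp only [not_or] at h0 h0' hg1 hg2
    obtain ⟨hx, hy, hz⟩ := h0
    obtain ⟨hx', hy', hz'⟩ := h0'
    have hzK : (z : K) ≠ 0 := by exact_mod_cast hz
    have hzK' : (z' : K) ≠ 0 := by exact_mod_cast hz'
    obtain ⟨q1, q2⟩ := hP
    simp only [X, Y] at q1 q2
    have r1 : x * z' = x' * z := by
      apply cube_inj
      rw [div_eq_div_iff (pow_ne_zero _ hzK) (pow_ne_zero _ hzK')] at q2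
      have : ((a : K) ^ 2 * b) * (x ^ 3 * z' ^ 3) = ((a : K) ^ 2 * b) * (x' ^ 3 * z ^ 3) := by
        linear_combination q2
      have := mul_left_cancel₀ (mul_ne_zero (pow_ne_zero _ haK) hbK) this
      rw [mul_pow, mul_pow]
      exact_mod_cast this
    have r2 : y * z' = y' * z := by
      rw [div_eq_div_iff (pow_ne_zero _ hzK) (pow_ne_zero _ hzK')] at q1
      have : ((a : K) * b) * (x * y * z' ^ 2) = ((a : K) * b) * (x' * y' * z ^ 2) := by
        linear_combination -q1
      have := mul_left_cancel₀ (mul_ne_zero haK hbK) this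
      have h3 : x * y * z' ^ 2 = x' * y' * z ^ 2 := by exact_mod_cast this
      have h4 : (x' * z) * (y * z') = (x' * z) * (y' * z) := by
        linear_combination h3 - y * z' * r1
      exact mul_left_cancel₀ (mul_ne_zero hx' hz) h4
    have r3 : x * y' = x' * y := by
      have h4 : (z * z') * (x * y') = (z * z') * (x' * y) := by
        linear_combination z * y' * r1 - x' * z * r2
      exact mul_left_cancel₀ (mul_ne_zero hz hz') h4
    exact prim_pm hg1 hg2 r3 r1 r2
  have hB0 : 0 ≤ B := by linarith
  have hB1 : (1 : ℝ) ≤ B ^ 9 := one_le_pow₀ (by linarith)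
  have hmain := main_count hg hm hmK (A := 2 * B ^ 9) (by linarith) k S (by
    intro P hP
    obtain ⟨t, ht, rfl⟩ := Finset.mem_image.1 hP
    rw [Set.Finite.mem_toFinset] at ht
    have n1 := hns t ht
    refine ⟨X t, Y t, n1, dif_pos n1, ?_, ?_⟩
    · obtain ⟨x, y, z⟩ := t
      obtain ⟨-, h0⟩ := ht
      simp only [not_or] at h0
      obtain ⟨hx, hy, hz⟩ := h0
      have hzK : (z : K) ≠ 0 := by exact_mod_cast hz
      have hxK : (x : K) ≠ 0 := by exact_mod_cast hx
      have hyK : (y : K) ≠ 0 := by exact_mod_cast hy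
      simp only [X]
      exact div_ne_zero (neg_ne_zero.2 (mul_ne_zero (mul_ne_zero haK hbK) (mul_ne_zero hxK hyK)))
        (pow_ne_zero _ hzK)
    · obtain ⟨x, y, z⟩ := t
      obtain ⟨⟨-, -, b1, b2, b3⟩, h0⟩ := ht
      simp only [not_or] at h0 b1 b2 b3
      obtain ⟨hx, hy, hz⟩ := h0
      have hzK : (z : K) ≠ 0 := by exact_mod_cast hz
      refine ⟨((a * x ^ 3 : ℤ) : 𝓞 K), ((c * z ^ 3 : ℤ) : 𝓞 K), ?_, ?_, ?_, ?_⟩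
      · exact_mod_cast mul_ne_zero hc (pow_ne_zero 3 hz)
      · simp only [Y]
        push_cast
        simp only [map_mul, map_pow, map_intCast]
        field_simp
      · rw [nrm_int]; push_cast
        rw [abs_mul, abs_pow]
        calc |(a : ℝ)| * |(x : ℝ)| ^ 3 ≤ (2 * B ^ 6) * B ^ 3 := by gcongr
          _ = _ := by ring
      · rw [nrm_int]; push_cast
        rw [abs_mul, abs_pow]
        calc |(c : ℝ)| * |(z : ℝ)| ^ 3 ≤ (2 * B ^ 6) * B ^ 3 := by gcongr
          _ = _ := by ring)
  have hN2 : N.ncard = hNf.toFinset.card := Set.ncard_eq_toFinset_card N hNf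
  have hfin : (Sol a b c B).ncard ≤ 6 + 2 * S.card := by omega
  have hfin' : ((Sol a b c B).ncard : ℝ) ≤ 6 + 2 * S.card := by exact_mod_cast hfin
  linarith

end Red
end DCubic

namespace DCubic
open NumberField IsDedekindDomain WeierstrassCurve

section Final
set_option linter.unusedSectionVars false
variable {K : Type*} [Field K] [NumberField K] [DecidableEq K] {σ : K →+* ℂ} {w : 𝓞 K}

lemma final_count (hg : Good σ w) [Fintype (𝓞 K)ˣ] (ε : ℝ) (hε : 0 < ε) :
    ∃ C : ℝ, 0 < C ∧ ∀ a b c : ℤ, a ≠ 0 → b ≠ 0 → c ≠ 0 → ∀ B : ℝ, 2 ≤ B →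
      ((Sol a b c B).ncard : ℝ) ≤ C * B ^ ε := by
  obtain ⟨k, hk⟩ : ∃ k : ℕ, (1 / 3 : ℝ) ^ k < ε / 2 / 828 :=
    exists_pow_lt_of_lt_one (by positivity) (by norm_num)
  set e : ℝ := (1 / 3 : ℝ) ^ k with he
  have he0 : 0 < e := by positivity
  set η : ℝ := ε / (36 * (k + 1)) with hη
  have hη0 : 0 < η := by positivity
  have hηk : 18 * η * k ≤ ε / 2 := by
    have : 18 * η * (k + 1) = ε / 2 := by rw [hη]; field_simp; norm_num
    nlinarith
  obtain ⟨C₁, hC₁, hbad⟩ := bad_bound (K := K) η hη0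
  set D : ℝ := (3 + Fintype.card (𝓞 K)ˣ) * (C₁ * 8 ^ η) with hD
  have hD0 : 0 < D := by positivity
  set D₂ : ℝ := 2 + 1875 * (18 * ((2 : ℝ) ^ 61) ^ e) ^ 4 with hD₂
  have hD₂0 : 0 < D₂ := by positivity
  refine ⟨6 + 2 * (D ^ k * D₂), by positivity, fun a b c ha hb hc B hB => ?_⟩
  have hB0 : 0 < B := by linarith
  have hB1 : 1 ≤ B := by linarith
  have hBe : 1 ≤ B ^ ε := Real.one_le_rpow hB1 hε.le
  have hBe2 : 1 ≤ B ^ (ε / 2) := Real.one_le_rpow hB1 (by positivity)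
  have hP : 0 ≤ D ^ k * D₂ := by positivity
  rcases reduce ha hb hc B with h | ⟨a', b', c', ha', hb', hc', ba, bb, bc, hsub⟩
  · have : ((Sol a b c B).ncard : ℝ) ≤ 2 := by exact_mod_cast h
    nlinarith
  · have h1 : (Sol a b c B).ncard ≤ (Sol a' b' c' B).ncard :=
      Set.ncard_le_ncard hsub (Sol_finite _ _ _ _)
    have h1' : ((Sol a b c B).ncard : ℝ) ≤ ((Sol a' b' c' B).ncard : ℝ) := by exact_mod_cast h1
    have hm : (((a' * b' * c' : ℤ)) : 𝓞 K) ≠ 0 := by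
      exact_mod_cast mul_ne_zero (mul_ne_zero ha' hb') hc'
    have h2 := curve_count hg ha' hb' hc' hB ba bc hm k
    have hmB : |((a' * b' * c' : ℤ) : ℝ)| ≤ 8 * B ^ 18 := by
      push_cast
      rw [abs_mul, abs_mul]
      calc |(a' : ℝ)| * |(b' : ℝ)| * |(c' : ℝ)| ≤ (2 * B ^ 6) * (2 * B ^ 6) * (2 * B ^ 6) := by
            gcongr
        _ = _ := by ring
    have h3 : (((3 + Fintype.card (𝓞 K)ˣ) * 3 ^ (finite_bad hm).toFinset.card : ℕ) : ℝ) ≤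
        D * B ^ (18 * η) := by
      have h4 := hbad (a' * b' * c') hm
      generalize (finite_bad hm).toFinset.card = n at h4 ⊢
      rw [Nat.cast_mul, Nat.cast_add, Nat.cast_pow, Nat.cast_ofNat]
      have h5 : |((a' * b' * c' : ℤ) : ℝ)| ^ η ≤ 8 ^ η * B ^ (18 * η) := by
        refine (Real.rpow_le_rpow (abs_nonneg _) hmB hη0.le).trans (le_of_eq ?_)
        rw [Real.mul_rpow (by norm_num) (by positivity), ← Real.rpow_natCast B,
          ← Real.rpow_mul hB0.le]
        norm_num
      calc (3 + (Fintype.card (𝓞 K)ˣ : ℝ)) * 3 ^ n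
          ≤ (3 + (Fintype.card (𝓞 K)ˣ : ℝ)) * (C₁ * (8 ^ η * B ^ (18 * η))) := by
            refine mul_le_mul_of_nonneg_left (h4.trans ?_) (by positivity)
            exact mul_le_mul_of_nonneg_left h5 hC₁.le
        _ = D * B ^ (18 * η) := by rw [hD]; ring
    have h6 : (((3 + Fintype.card (𝓞 K)ˣ) * 3 ^ (finite_bad hm).toFinset.card : ℕ) : ℝ) ^ k ≤
        D ^ k * B ^ (ε / 2) := by
      refine (pow_le_pow_left₀ (Nat.cast_nonneg _) h3 k).trans ?_
      rw [mul_pow, ← Real.rpow_natCast (B ^ (18 * η)), ← Real.rpow_mul hB0.le]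
      exact mul_le_mul_of_nonneg_left (Real.rpow_le_rpow_of_exponent_le hB1 hηk) (by positivity)
    have h7 : (2 + 1875 * (18 * (2 ^ 38 * (2 * B ^ 9) ^ 23 : ℝ) ^ e) ^ 4) ≤ D₂ * B ^ (ε / 2) := by
      have e1 : (2 ^ 38 * (2 * B ^ 9) ^ 23 : ℝ) = 2 ^ 61 * B ^ 207 := by ring
      have e2 : (18 * (2 ^ 38 * (2 * B ^ 9) ^ 23 : ℝ) ^ e) ^ 4
          = (18 * ((2 : ℝ) ^ 61) ^ e) ^ 4 * B ^ (828 * e) := by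
        rw [e1, Real.mul_rpow (by positivity) (by positivity), ← mul_assoc, mul_pow _ _ 4]
        congr 1
        rw [← Real.rpow_natCast B 207, ← Real.rpow_mul hB0.le,
          ← Real.rpow_natCast (B ^ _) 4, ← Real.rpow_mul hB0.le]
        congr 1; push_cast; ring
      have e3 : B ^ (828 * e) ≤ B ^ (ε / 2) :=
        Real.rpow_le_rpow_of_exponent_le hB1 (by linarith [(lt_div_iff₀ (by norm_num)).1 hk])
      rw [e2, hD₂]
      have e4 : 0 ≤ (18 * ((2 : ℝ) ^ 61) ^ e) ^ 4 := by positivity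
      generalize (18 * ((2 : ℝ) ^ 61) ^ e) ^ 4 = z at e4 ⊢
      nlinarith [mul_le_mul_of_nonneg_left e3 e4]
    have h8 : B ^ (ε / 2) * B ^ (ε / 2) = B ^ ε := by
      rw [← Real.rpow_add hB0]; congr 1; ring
    have h9 := mul_le_mul h6 h7 (by positivity) (by positivity)
    rw [show D ^ k * B ^ (ε / 2) * (D₂ * B ^ (ε / 2)) = D ^ k * D₂ * B ^ ε by rw [← h8]; ring] at h9
    rw [← he] at h2
    have h10 : (6 + 2 * (D ^ k * D₂)) * B ^ ε = 6 * B ^ ε + 2 * (D ^ k * D₂ * B ^ ε) := by ring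
    rw [h10]
    linarith

end Final

lemma exists_count_aux (K : Type*) [Field K] [NumberField K] [IsCyclotomicExtension {3} ℚ K]
    (ε : ℝ) (hε : 0 < ε) :
    ∃ C : ℝ, 0 < C ∧ ∀ a b c : ℤ, a ≠ 0 → b ≠ 0 → c ≠ 0 → ∀ B : ℝ, 2 ≤ B →
      ((Sol a b c B).ncard : ℝ) ≤ C * B ^ ε := by
  classical
  have hζ := IsCyclotomicExtension.zeta_spec 3 ℚ K
  obtain ⟨σ⟩ : Nonempty (K →+* ℂ) := inferInstance
  have hg : Good σ hζ.toInteger :=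
    ⟨zeta_sq hζ, exists_coord hζ, IsCyclotomicExtension.Rat.three_pid K⟩
  have hfin : Finite (𝓞 K)ˣ := by
    refine Set.finite_univ_iff.1 (Set.Finite.subset (List.finite_toSet _)
      (fun u _ => IsCyclotomicExtension.Rat.Three.Units.mem hζ u))
  have : Fintype (𝓞 K)ˣ := Fintype.ofFinite _
  exact final_count hg ε hε

lemma exists_count (ε : ℝ) (hε : 0 < ε) :
    ∃ C : ℝ, 0 < C ∧ ∀ a b c : ℤ, a ≠ 0 → b ≠ 0 → c ≠ 0 → ∀ B : ℝ, 2 ≤ B →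
      ((Sol a b c B).ncard : ℝ) ≤ C * B ^ ε := by
  have h : @IsCyclotomicExtension {3} ℚ (CyclotomicField 3 ℚ) _ _ DivisionRing.toRatAlgebra := by
    have h0 := CyclotomicField.isCyclotomicExtension 3 ℚ
    have hA : (DivisionRing.toRatAlgebra : Algebra ℚ (CyclotomicField 3 ℚ)) =
        CyclotomicField.algebra 3 ℚ := Subsingleton.elim _ _
    rw [hA]
    exact h0
  have : NumberField (CyclotomicField 3 ℚ) := IsCyclotomicExtension.numberField {3} ℚ _
  exact exists_count_aux (CyclotomicField 3 ℚ) ε hε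

end DCubic

/-- For every `ε > 0` there is a constant `C(ε)` such that for all nonzero integers `a, b, c`
and all real `B ≥ 2`, the number of integer triples `(x, y, z)` with
`a x³ + b y³ + c z³ = 0`, `gcd(x, y, z) = 1` and `max(|x|, |y|, |z|) ≤ B` is at most
`C(ε) * B ^ ε`; in particular the bound is uniform in `a, b, c`. -/
theorem count_diagonal_cubic (ε : ℝ) (hε : 0 < ε) :
    ∃ C : ℝ, 0 < C ∧ ∀ a b c : ℤ, a ≠ 0 → b ≠ 0 → c ≠ 0 → ∀ B : ℝ, 2 ≤ B →
      (({t : ℤ × ℤ × ℤ |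
          a * t.1 ^ 3 + b * t.2.1 ^ 3 + c * t.2.2 ^ 3 = 0 ∧
          Int.gcd t.1 (Int.gcd t.2.1 t.2.2) = 1 ∧
          (|t.1| : ℝ) ≤ B ∧ (|t.2.1| : ℝ) ≤ B ∧ (|t.2.2| : ℝ) ≤ B}).ncard : ℝ) ≤
        C * B ^ (ε : ℝ) :=
  DCubic.exists_count ε hε
end

section
/- There is an absolute constant C such that for every cube-free positive integer M, the rank r(M) of the group of rational points of the elliptic curve E_M : Y² = X³ − 3M² satisfies r(M) ≤ C(ω(M) + 1), and moreover ω(M) + 1 ≤ C · log(3M)/log log(3M); in particular r(M) ≤ C² · log(3M)/log log(3M). -/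
/-- The elliptic curve `E_M : Y² = X³ - 3M²` over `ℚ`, as a Weierstrass curve in affine form. -/
def EM (M : ℕ) : WeierstrassCurve.Affine ℚ :=
  { a₁ := 0, a₂ := 0, a₃ := 0, a₄ := 0, a₆ := -3 * (M : ℚ) ^ 2 }


open WeierstrassCurve

/-- The curve `y² = x³ + c²`. -/
def Ec {F : Type*} [Field F] (c : F) : WeierstrassCurve.Affine F :=
  { a₁ := 0, a₂ := 0, a₃ := 0, a₄ := 0, a₆ := c ^ 2 }

section basics
variable {F : Type*} [Field F] {c : F}

lemma Ec_equation {x y : F} : (Ec c).Equation x y ↔ y ^ 2 = x ^ 3 + c ^ 2 := by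
  rw [WeierstrassCurve.Affine.equation_iff]; simp [Ec]

lemma Ec_negY (x y : F) : (Ec c).negY x y = -y := by simp [WeierstrassCurve.Affine.negY, Ec]

lemma Ec_addX (x₁ x₂ l : F) : (Ec c).addX x₁ x₂ l = l ^ 2 - x₁ - x₂ := by
  simp [WeierstrassCurve.Affine.addX, Ec]

lemma Ec_addY (x₁ x₂ y₁ l : F) :
    (Ec c).addY x₁ x₂ y₁ l = -(l * (l ^ 2 - x₁ - x₂ - x₁) + y₁) := by
  rw [WeierstrassCurve.Affine.addY, WeierstrassCurve.Affine.negAddY, Ec_negY, Ec_addX]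

lemma Ec_delta : (Ec c).Δ = -432 * c ^ 4 := by
  simp [WeierstrassCurve.Δ, WeierstrassCurve.b₂, WeierstrassCurve.b₄, WeierstrassCurve.b₆,
    WeierstrassCurve.b₈, Ec]; ring

lemma Ec_elliptic [CharZero F] (hc : c ≠ 0) : (Ec c).IsElliptic := by
  constructor
  rw [Ec_delta]
  exact (IsUnit.mk0 _ (by simp [hc]))

lemma Ec_nonsingular [CharZero F] (hc : c ≠ 0) {x y : F} :
    (Ec c).Nonsingular x y ↔ y ^ 2 = x ^ 3 + c ^ 2 := by
  have := Ec_elliptic hc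
  rw [← WeierstrassCurve.Affine.equation_iff_nonsingular, Ec_equation]

lemma Ec_slope_of_X_ne [DecidableEq F] {x₁ x₂ y₁ y₂ : F} (h : x₁ ≠ x₂) :
    (Ec c).slope x₁ x₂ y₁ y₂ = (y₁ - y₂) / (x₁ - x₂) :=
  WeierstrassCurve.Affine.slope_of_X_ne h

lemma Ec_slope_self [DecidableEq F] {x y : F} (h : y ≠ -y) :
    (Ec c).slope x x y y = 3 * x ^ 2 / (2 * y) := by
  rw [WeierstrassCurve.Affine.slope_of_Y_ne rfl (by rwa [Ec_negY]), Ec_negY]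
  simp [Ec]; ring

end basics

set_option linter.unusedSectionVars false
section heights
open Height Affine.Point
variable {F : Type*} [Field F] [CharZero F] [DecidableEq F] {c : F}

lemma addSub_aux1 {x₁ x₂ y₁ y₂ : F} (h₁ : y₁ ^ 2 = x₁ ^ 3 + c ^ 2) (h₂ : y₂ ^ 2 = x₂ ^ 3 + c ^ 2)
    (hx : x₁ ≠ x₂) :
    (x₁ - x₂) ^ 2 * (((y₁ - y₂) / (x₁ - x₂)) ^ 2 - x₁ - x₂ + (((y₁ + y₂) / (x₁ - x₂)) ^ 2 - x₁ - x₂))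
      = 2 * (x₁ + x₂) * (x₁ * x₂) + 4 * c ^ 2 := by
  have hx' := sub_ne_zero.mpr hx
  field_simp
  linear_combination 2 * h₁ + 2 * h₂

lemma addSub_aux0 {x₁ x₂ y₁ y₂ : F} (h₁ : y₁ ^ 2 = x₁ ^ 3 + c ^ 2) (h₂ : y₂ ^ 2 = x₂ ^ 3 + c ^ 2)
    (hx : x₁ ≠ x₂) :
    (x₁ - x₂) ^ 2 * ((((y₁ - y₂) / (x₁ - x₂)) ^ 2 - x₁ - x₂) * (((y₁ + y₂) / (x₁ - x₂)) ^ 2 - x₁ - x₂))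
      = (x₁ * x₂) ^ 2 - 4 * c ^ 2 * (x₁ + x₂) := by
  have hx' := sub_ne_zero.mpr hx
  have e : (x₁ - x₂) ^ 2 * ((((y₁ - y₂) / (x₁ - x₂)) ^ 2 - x₁ - x₂) *
      (((y₁ + y₂) / (x₁ - x₂)) ^ 2 - x₁ - x₂)) = ((y₁ ^ 2 - y₂ ^ 2) ^ 2 - 2 * (y₁ ^ 2 + y₂ ^ 2) *
      (x₁ + x₂) * (x₁ - x₂) ^ 2 + (x₁ + x₂) ^ 2 * (x₁ - x₂) ^ 4) / (x₁ - x₂) ^ 2 := by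
    field_simp; ring
  rw [e, h₁, h₂]
  field_simp
  ring

lemma sym2x_addSub (hc : c ≠ 0) (P Q : (Ec c).Point) :
    ∃ t : F, t ≠ 0 ∧
      (fun i ↦ (addSubMap (Ec c) i).eval (P.sym2x Q)) = t • (P + Q).sym2x (P - Q) := by
  have key : ∀ v : Fin 3 → F, (fun i ↦ (addSubMap (Ec c) i).eval v) =
      ![v 0 ^ 2 - 4 * c ^ 2 * v 1 * v 2, 2 * v 1 * v 0 + 4 * c ^ 2 * v 2 ^ 2,
        v 1 ^ 2 - 4 * v 0 * v 2] := by
    intro v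
    ext i
    fin_cases i <;> simp [addSubMap, WeierstrassCurve.b₂, WeierstrassCurve.b₄,
      WeierstrassCurve.b₆, WeierstrassCurve.b₈, Ec]
  rw [key]
  match P, Q with
  | 0, 0 => exact ⟨1, one_ne_zero, by ext i; fin_cases i <;> simp⟩
  | 0, .some x y h =>
    refine ⟨1, one_ne_zero, ?_⟩
    rw [zero_add, zero_sub, sym2x_neg_right]
    ext i; fin_cases i <;> simp <;> ring
  | .some x y h, 0 =>
    refine ⟨1, one_ne_zero, ?_⟩
    rw [add_zero, sub_zero]
    ext i; fin_cases i <;> simp <;> ring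
  | .some x₁ y₁ h₁, .some x₂ y₂ h₂ =>
    have e₁ := (Ec_nonsingular hc).mp h₁
    have e₂ := (Ec_nonsingular hc).mp h₂
    by_cases hx : x₁ = x₂
    · have dbl : ∀ (x y : F) (h : (Ec c).Nonsingular x y), ∃ t : F, t ≠ 0 ∧
          ![(x * x) ^ 2 - 4 * c ^ 2 * (x + x), 2 * (x + x) * (x * x) + 4 * c ^ 2, 0] =
            t • (Affine.Point.some x y h + Affine.Point.some x y h).sym2x 0 := by
        intro x y h
        have e := (Ec_nonsingular hc).mp h
        by_cases hy : y = -y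
        · rw [add_of_Y_eq rfl (by rwa [Ec_negY])]
          have hy0 : y = 0 := by
            have : 2 * y = 0 := by linear_combination hy
            simpa using this
          subst hy0
          have hx0 : x ≠ 0 := by
            rintro rfl
            exact hc (by simpa using e.symm)
          refine ⟨9 * x ^ 4, by simpa using hx0, ?_⟩
          ext i; fin_cases i <;> simp
          · linear_combination (8 * x) * e
          · linear_combination (-4) * e
        · rw [add_of_Y_ne (by rwa [Ec_negY]), sym2x_some_zero, Ec_slope_self hy, Ec_addX]
          have hy0 : y ≠ 0 := by rintro rfl; simp at hy
          refine ⟨4 * y ^ 2, by simpa using hy0, ?_⟩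
          ext i; fin_cases i <;> simp
          · field_simp
            linear_combination (32 * x) * e
          · linear_combination (-4) * e
      subst hx
      rcases (X_eq_iff (h₁ := h₁) (h₂ := h₂)).mp rfl with hPQ | hPQ
      · rw [← hPQ, sub_self]
        obtain ⟨t, ht, h⟩ := dbl x₁ y₁ h₁
        refine ⟨t, ht, ?_⟩
        rw [← h]
        ext i; fin_cases i <;> simp; ring
      · have hQ : Affine.Point.some x₁ y₂ h₂ = - Affine.Point.some x₁ y₁ h₁ := by
          rw [hPQ, neg_neg]
        rw [hQ, sub_neg_eq_add, add_neg_cancel, sym2x_neg_right, sym2x_comm 0]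
        obtain ⟨t, ht, h⟩ := dbl x₁ y₁ h₁
        refine ⟨t, ht, ?_⟩
        rw [← h]
        ext i; fin_cases i <;> simp; ring
    · refine ⟨(x₁ - x₂) ^ 2, pow_ne_zero _ (sub_ne_zero.mpr hx), ?_⟩
      rw [sub_eq_add_neg (Affine.Point.some x₁ y₁ h₁), neg_some, add_of_X_ne hx, add_of_X_ne hx, sym2x_some_some,
        sym2x_some_some, Ec_slope_of_X_ne hx, Ec_slope_of_X_ne hx, Ec_addX, Ec_addX, Ec_negY,
        sub_neg_eq_add]
      ext i; fin_cases i <;> simp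
      · rw [addSub_aux0 e₁ e₂ hx]
      · rw [addSub_aux1 e₁ e₂ hx]
      · ring

lemma parallelogram [AdmissibleAbsValues F] (hc : c ≠ 0) :
    ∃ C : ℝ, ∀ P Q : (Ec c).Point, |logHeight (P + Q).xRep + logHeight (P - Q).xRep -
      2 * (logHeight P.xRep + logHeight Q.xRep)| ≤ C := by
  have := Ec_elliptic hc
  obtain ⟨C₁, h₁⟩ := abs_logHeight_addSubMap_sub_two_mul_logHeight_le (Ec c)
  obtain ⟨C₂, h₂⟩ := abs_logHeight_sym2_sub_le F
  have h₃ : ∀ P Q : (Ec c).Point,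
      |logHeight (P.sym2x Q) - (logHeight P.xRep + logHeight Q.xRep)| ≤ C₂ := by
    intro P Q
    have hv : ∀ v : Fin 2 → F, v = ![v 0, v 1] := fun v ↦ by ext i; fin_cases i <;> rfl
    have := h₂ (a := P.xRep 0) (b := P.xRep 1) (c := Q.xRep 0) (d := Q.xRep 1)
      (by rw [← hv]; exact xRep_ne_zero P) (by rw [← hv]; exact xRep_ne_zero Q)
    rw [← hv, ← hv] at this
    exact this
  refine ⟨C₁ + 3 * C₂, fun P Q ↦ ?_⟩
  obtain ⟨t, ht, h⟩ := sym2x_addSub hc P Q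
  have a₁ := h₁ (P.sym2x Q)
  rw [h, logHeight_smul_eq_logHeight _ ht] at a₁
  have a₂ := h₃ P Q
  have a₃ := h₃ (P + Q) (P - Q)
  rw [abs_le] at *
  constructor <;> linarith

lemma fg_of_finiteIndex [NumberField F] (hc : c ≠ 0)
    (H : (nsmulAddMonoidHom (α := (Ec c).Point) 3).range.FiniteIndex) :
    AddGroup.FG (Ec c).Point := by
  obtain ⟨C, hC⟩ := parallelogram hc
  set h : (Ec c).Point → ℝ := fun P ↦ logHeight P.xRep with hh
  have hC' : ∀ P Q, |h (P + Q) + h (P - Q) - 2 * (h P + h Q)| ≤ C := hC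
  have h0 : ∀ P, 0 ≤ h P := fun P ↦ by
    match P with
    | 0 =>
      have h2 := hC 0 0
      simp only [hh, xRep_zero] 
      have : ![(1 : F), 0] = ![1, 0] := rfl
      exact Real.log_nonneg (one_le_mulHeight _)
    | .some x y _ => exact Real.log_nonneg (one_le_mulHeight _)
  have hN : Northcott h := by
    constructor
    intro B
    have hf := NumberField.finite_setOfPred_logHeight₁_le F B
    have hf' : (insert (![1, 0] : Fin 2 → F) ((fun x : F ↦ ![x, 1]) '' {x : F | logHeight₁ x ≤ B})).Finite :=
      (hf.image _).insert _
    refine Set.Finite.of_finite_fibers (fun P : (Ec c).Point ↦ P.xRep) (hf'.subset ?_) ?_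
    · rintro _ ⟨P, hP, rfl⟩
      match P with
      | 0 => simp
      | .some x y hxy =>
        right
        refine ⟨x, ?_, by simp⟩
        simpa [logHeight₁_eq_logHeight, hh] using hP
    · rintro _ ⟨P, hP, rfl⟩
      refine (Set.toFinite {P, -P}).subset ?_
      rintro Q ⟨-, hQ⟩
      simpa using xRep_eq_xRep_iff.mp hQ
  refine AddCommGroup.fg_of_descent (n := 3) (h := h) (a := 2) (b := 9)
    (c := fun g ↦ 2 * h (-g) + C) (c₀ := 3 * C + 2 * h 0) (by norm_num) (by norm_num) H ?_ ?_
  · intro g x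
    have := hC' (g + x) (-g)
    rw [abs_le] at this
    have e : g + x + -g = x := by abel
    rw [e] at this
    have := h0 (g + x - -g)
    linarith
  · intro x
    have p1 := hC' (x + x) x
    have p2 := hC' x x
    rw [abs_le] at p1 p2
    rw [add_sub_cancel_right] at p1
    rw [sub_self] at p2
    have e : 3 • x = x + x + x := by abel
    rw [e]
    linarith
end heights


section grouptheory

lemma finrank_le_of_index {A : Type*} [AddCommGroup A] [AddGroup.FG A] {m : ℕ}
    (h0 : (nsmulAddMonoidHom (α := A) 3).range.index ≠ 0)
    (h : (nsmulAddMonoidHom (α := A) 3).range.index ≤ 3 ^ m) :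
    Module.finrank ℤ A ≤ m := by
  have : Module.Finite ℤ A := Module.Finite.iff_addGroup_fg.mpr inferInstance
  let T := Submodule.torsion ℤ A
  have hr : Module.finrank ℤ (A ⧸ T) = Module.finrank ℤ A := by
    exact finrank_quotient_eq_of_le_torsion fun _ a => a
  let b := Module.finBasis ℤ (A ⧸ T)
  let r := Module.finrank ℤ (A ⧸ T)
  let f : A →+ (Fin r → ZMod 3) :=
    (((Int.castAddHom (ZMod 3)).compLeft (Fin r)).comp b.equivFun.toLinearMap.toAddMonoidHom).comp
      T.mkQ.toAddMonoidHom
  have hf : Function.Surjective f := by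
    have h1 : Function.Surjective T.mkQ := Submodule.mkQ_surjective T
    have h2 : Function.Surjective b.equivFun := b.equivFun.surjective
    have h3 : Function.Surjective ((Int.castAddHom (ZMod 3)).compLeft (Fin r)) := by
      intro v
      exact ⟨fun i ↦ (v i).val, by ext i; simp⟩
    exact (h3.comp h2).comp h1
  have hk : (nsmulAddMonoidHom (α := A) 3).range ≤ f.ker := by
    rintro _ ⟨x, rfl⟩
    rw [AddMonoidHom.mem_ker, nsmulAddMonoidHom_apply, map_nsmul]
    ext i
    have : (3 : ZMod 3) = 0 := rfl
    simp [this]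
  have h1 : f.ker.index = 3 ^ r := by
    rw [AddSubgroup.index_ker, AddMonoidHom.range_eq_top.mpr hf]
    simp
  have h2 := Nat.le_of_dvd (Nat.pos_of_ne_zero h0) (AddSubgroup.index_dvd_of_le hk)
  rw [h1] at h2
  rw [← hr]
  exact (Nat.pow_le_pow_iff_right (by norm_num)).mp (h2.trans h)

lemma index_bound {A B : Type*} [AddCommGroup A] [AddCommGroup B] (θ : A →+ A)
    (hθ : ∀ x, θ (θ x) = - (3 • x)) (α : A →+ B) (hα : ∀ x, α x = 0 → ∃ y, θ y = x)
    (N : ℕ) (hf : (Set.range α).Finite) (hN : (Set.range α).ncard ≤ N) :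
    (nsmulAddMonoidHom (α := A) 3).range.index ≠ 0 ∧
    (nsmulAddMonoidHom (α := A) 3).range.index ≤ N ^ 2 := by
  have e : (nsmulAddMonoidHom (α := A) 3).range = θ.range.map θ := by
    ext x
    constructor
    · rintro ⟨y, rfl⟩
      exact ⟨θ (-y), ⟨-y, rfl⟩, by simp [hθ]⟩
    · rintro ⟨_, ⟨y, rfl⟩, rfl⟩
      exact ⟨-y, by simp [hθ]⟩
  have hk : α.ker ≤ θ.range := fun x hx ↦ hα x hx
  have hki : α.ker.index = (Set.range α).ncard := by
    rw [AddSubgroup.index_ker]; rfl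
  have hpos : 0 < (Set.range α).ncard := (Set.ncard_pos hf).mpr ⟨_, 0, rfl⟩
  have hd : θ.range.index ∣ α.ker.index := AddSubgroup.index_dvd_of_le hk
  have hle : θ.range.index ≤ N := (Nat.le_of_dvd (by omega) hd).trans (hki ▸ hN)
  have hne : θ.range.index ≠ 0 := by
    intro h; rw [h] at hd; rw [zero_dvd_iff] at hd; omega
  have h2 : (θ.range.map θ).index = (θ.range ⊔ θ.ker).index * θ.range.index :=
    AddSubgroup.index_map _ _
  have h3 : (θ.range ⊔ θ.ker).index ∣ θ.range.index := AddSubgroup.index_dvd_of_le le_sup_left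
  have h4 := Nat.le_of_dvd (Nat.pos_of_ne_zero hne) h3
  rw [e, h2]
  constructor
  · refine mul_ne_zero ?_ hne
    intro h; rw [h] at h3; exact hne (zero_dvd_iff.mp h3)
  · rw [sq]; exact Nat.mul_le_mul (h4.trans hle) hle
end grouptheory


open WeierstrassCurve
set_option linter.unusedSectionVars false

section rot
open Affine.Point
variable {F : Type*} [Field F] [CharZero F] [DecidableEq F] {c : F}

lemma Ec_slope_rel (hc : c ≠ 0) {x₁ x₂ y₁ y₂ : F} (h₁ : y₁ ^ 2 = x₁ ^ 3 + c ^ 2)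
    (h₂ : y₂ ^ 2 = x₂ ^ 3 + c ^ 2) (hxy : ¬ (x₁ = x₂ ∧ y₁ = (Ec c).negY x₂ y₂)) :
    y₁ - y₂ = (Ec c).slope x₁ x₂ y₁ y₂ * (x₁ - x₂) ∧
    x₁ ^ 2 + x₁ * x₂ + x₂ ^ 2 = (Ec c).slope x₁ x₂ y₁ y₂ * (y₁ + y₂) := by
  rw [Ec_negY] at hxy
  by_cases hx : x₁ = x₂
  · subst hx
    have hy : y₁ ≠ -y₂ := fun h ↦ hxy ⟨rfl, h⟩
    have hy' : y₁ = y₂ := by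
      have : (y₁ - y₂) * (y₁ + y₂) = 0 := by linear_combination h₁ - h₂
      rcases mul_eq_zero.mp this with h | h
      · exact sub_eq_zero.mp h
      · exact absurd (eq_neg_of_add_eq_zero_left h) hy
    subst hy'
    rw [Ec_slope_self hy]
    have hy0 : y₁ ≠ 0 := by rintro rfl; simp at hy
    constructor
    · ring
    · field_simp; ring
  · rw [Ec_slope_of_X_ne hx]
    have := sub_ne_zero.mpr hx
    constructor
    · field_simp
    · field_simp
      linear_combination h₂ - h₁

lemma Ec_slope_unique {x₁ x₂ y₁ y₂ l m : F}
    (hxy : ¬ (x₁ = x₂ ∧ y₁ = - y₂))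
    (h1 : y₁ - y₂ = l * (x₁ - x₂)) (h2 : x₁ ^ 2 + x₁ * x₂ + x₂ ^ 2 = l * (y₁ + y₂))
    (h3 : y₁ - y₂ = m * (x₁ - x₂)) (h4 : x₁ ^ 2 + x₁ * x₂ + x₂ ^ 2 = m * (y₁ + y₂)) : l = m := by
  have e1 : (l - m) * (x₁ - x₂) = 0 := by linear_combination h3 - h1
  have e2 : (l - m) * (y₁ + y₂) = 0 := by linear_combination h4 - h2
  by_contra hlm
  have hlm' := sub_ne_zero.mpr hlm
  refine hxy ⟨?_, ?_⟩
  · simpa [hlm', sub_eq_zero] using e1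
  · simpa [hlm', add_eq_zero_iff_eq_neg] using e2

/-- Multiplication by a primitive cube root of unity, as a function. -/
def rotFun (hc : c ≠ 0) (ω : F) (hω : ω ^ 3 = 1) : (Ec c).Point → (Ec c).Point
  | .zero => .zero
  | .some x y h => .some (ω * x) y ((Ec_nonsingular hc).mpr (by
      rw [(Ec_nonsingular hc).mp h, mul_pow, hω, one_mul]))

/-- Multiplication by a primitive cube root of unity, as a homomorphism. -/
def rot (hc : c ≠ 0) (ω : F) (hω : ω ^ 3 = 1) : (Ec c).Point →+ (Ec c).Point where
  toFun := rotFun hc ω hω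
  map_zero' := rfl
  map_add' P Q := by
    have hω0 : ω ≠ 0 := by rintro rfl; simp at hω
    match P, Q with
    | 0, Q => rw [zero_add]; exact (zero_add _).symm
    | .some x y h, 0 => rw [add_zero]; exact (add_zero _).symm
    | .some x₁ y₁ h₁, .some x₂ y₂ h₂ =>
      have e₁ := (Ec_nonsingular hc).mp h₁
      have e₂ := (Ec_nonsingular hc).mp h₂
      by_cases hxy : x₁ = x₂ ∧ y₁ = (Ec c).negY x₂ y₂
      · rw [add_of_Y_eq hxy.1 hxy.2]
        simp only [rotFun]
        rw [add_of_Y_eq (by rw [hxy.1]) (by rw [hxy.2, Ec_negY, Ec_negY])]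
        rfl
      · have hxy' : ¬ (ω * x₁ = ω * x₂ ∧ y₁ = (Ec c).negY (ω * x₂) y₂) := by
          rw [Ec_negY] at hxy ⊢
          rwa [mul_right_inj' hω0]
        rw [add_some hxy]
        simp only [rotFun]
        rw [add_some hxy']
        obtain ⟨r1, r2⟩ := Ec_slope_rel hc e₁ e₂ hxy
        have e₁' : y₁ ^ 2 = (ω * x₁) ^ 3 + c ^ 2 := by rw [mul_pow, hω, one_mul, e₁]
        have e₂' : y₂ ^ 2 = (ω * x₂) ^ 3 + c ^ 2 := by rw [mul_pow, hω, one_mul, e₂]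
        obtain ⟨r3, r4⟩ := Ec_slope_rel hc e₁' e₂' hxy'
        have hs : (Ec c).slope (ω * x₁) (ω * x₂) y₁ y₂ = ω ^ 2 * (Ec c).slope x₁ x₂ y₁ y₂ := by
          rw [Ec_negY] at hxy'
          refine Ec_slope_unique hxy' r3 r4 ?_ ?_
          · linear_combination r1 - (Ec c).slope x₁ x₂ y₁ y₂ * (x₁ - x₂) * hω
          · linear_combination ω ^ 2 * r2
        rw [Affine.Point.some.injEq, Ec_addX, Ec_addX, Ec_addY, Ec_addY, hs]
        constructor
        · linear_combination (- ω * (Ec c).slope x₁ x₂ y₁ y₂ ^ 2) * hω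
        · linear_combination (((Ec c).slope x₁ x₂ y₁ y₂ ^ 3) * (ω ^ 3 + 1) -
            (Ec c).slope x₁ x₂ y₁ y₂ * (2 * x₁ + x₂)) * hω

lemma rot_some (hc : c ≠ 0) (ω : F) (hω : ω ^ 3 = 1) {x y : F} (h : (Ec c).Nonsingular x y) :
    rot hc ω hω (.some x y h) = .some (ω * x) y ((Ec_nonsingular hc).mpr (by
      rw [(Ec_nonsingular hc).mp h, mul_pow, hω, one_mul])) := rfl

lemma cube_of_prim {ω : F} (h : ω ^ 2 + ω + 1 = 0) : ω ^ 3 = 1 := by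
  linear_combination (ω - 1) * h

lemma rot_sum (hc : c ≠ 0) {ω : F} (h : ω ^ 2 + ω + 1 = 0) (P : (Ec c).Point) :
    P + rot hc ω (cube_of_prim h) P = - rot hc ω (cube_of_prim h) (rot hc ω (cube_of_prim h) P) := by
  match P with
  | 0 => simp
  | .some x y hP =>
    have e := (Ec_nonsingular hc).mp hP
    have hω1 : ω ≠ 1 := by
      rintro rfl
      norm_num at h
    rw [rot_some, rot_some, neg_some]
    have hxy : ¬ (x = ω * x ∧ y = (Ec c).negY (ω * x) y) := by
      rw [Ec_negY]
      rintro ⟨h1, h2⟩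
      have hy : y = 0 := by
        have : 2 * y = 0 := by linear_combination h2
        simpa using this
      have hx : (ω - 1) * x = 0 := by linear_combination -h1
      have hx : x = 0 := by simpa [sub_ne_zero.mpr hω1] using hx
      subst hx hy
      exact hc (by simpa using e.symm)
    rw [add_some hxy]
    have e' : y ^ 2 = (ω * x) ^ 3 + c ^ 2 := by rw [mul_pow, cube_of_prim h, one_mul, e]
    obtain ⟨r1, r2⟩ := Ec_slope_rel hc e e' hxy
    have hs : (Ec c).slope x (ω * x) y y = 0 := by
      rw [Ec_negY] at hxy
      refine Ec_slope_unique hxy r1 r2 ?_ ?_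
      · ring
      · linear_combination x ^ 2 * h
    rw [Affine.Point.some.injEq, Ec_addX, Ec_addY, hs, Ec_negY]
    constructor
    · linear_combination -x * h
    · ring

/-- The endomorphism `√-3 = ω - ω²`. -/
def theta (hc : c ≠ 0) (ω : F) (h : ω ^ 2 + ω + 1 = 0) : (Ec c).Point →+ (Ec c).Point :=
  rot hc ω (cube_of_prim h) - (rot hc ω (cube_of_prim h)).comp (rot hc ω (cube_of_prim h))

lemma theta_apply (hc : c ≠ 0) (ω : F) (h : ω ^ 2 + ω + 1 = 0) (P : (Ec c).Point) :
    theta hc ω h P = rot hc ω (cube_of_prim h) P -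
      rot hc ω (cube_of_prim h) (rot hc ω (cube_of_prim h) P) := rfl

lemma theta_theta (hc : c ≠ 0) (ω : F) (h : ω ^ 2 + ω + 1 = 0) (P : (Ec c).Point) :
    theta hc ω h (theta hc ω h P) = - (3 • P) := by
  set r := rot hc ω (cube_of_prim h) with hr
  have h1 : r (r P) = - P - r P := by
    have := rot_sum hc h P
    rw [← hr] at this
    rw [← neg_eq_iff_eq_neg.mpr this]; abel
  have h2 : ∀ Q, theta hc ω h Q = r Q - r (r Q) := fun Q ↦ rfl
  rw [h2, h2]
  simp only [map_sub, h1, map_neg]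
  abel

lemma theta_surj (hc : c ≠ 0) (ω : F) (h : ω ^ 2 + ω + 1 = 0) {x y : F}
    (hP : (Ec c).Nonsingular x y) {u v : F} (hx : x = u * v) (hu : y - c = u ^ 3)
    (hv : y + c = v ^ 3) : ∃ Q, theta hc ω h Q = .some x y hP := by
  have hω := cube_of_prim h
  have hn : u ^ 2 + u * v + v ^ 2 ≠ 0 := by
    intro h0
    apply hc
    have : 2 * c = 0 := by linear_combination hv - hu + (v - u) * h0
    simpa using this
  have hs : 2 * ω + 1 ≠ 0 := by
    intro h0
    have : (3 : F) = 0 := by linear_combination 4 * h - (2 * ω + 1) * h0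
    norm_num at this
  have hs2 : (2 * ω + 1) ^ 2 = -3 := by linear_combination 4 * h
  have hcc : c = (v ^ 3 - u ^ 3) / 2 := by
    field_simp; linear_combination hv - hu
  have hyy : y = (v ^ 3 + u ^ 3) / 2 := by
    field_simp; linear_combination hv + hu
  set n := u ^ 2 + u * v + v ^ 2 with hnd
  have hQ : (Ec c).Nonsingular (-n) (-((2 * ω + 1) * (u + v) * n / 2)) := by
    rw [Ec_nonsingular hc]
    have : (-((2 * ω + 1) * (u + v) * n / 2)) ^ 2 = (2 * ω + 1) ^ 2 * ((u + v) * n / 2) ^ 2 := by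
      ring
    rw [this, hs2, hcc, hnd]
    ring
  refine ⟨.some _ _ hQ, ?_⟩
  rw [theta_apply, rot_some, rot_some, sub_eq_add_neg, neg_some]
  have hX : ω * -n ≠ ω * (ω * -n) := by
    intro h0
    have : (2 * ω + 1) * n = 0 := by linear_combination n * h - h0
    exact (mul_ne_zero hs hn) this
  rw [add_of_X_ne hX]
  have hX' : ω * -n - ω * (ω * -n) ≠ 0 := sub_ne_zero.mpr hX
  have hsl : (Ec c).slope (ω * -n) (ω * (ω * -n)) (-((2 * ω + 1) * (u + v) * n / 2))
      ((Ec c).negY (ω * (ω * -n)) (-((2 * ω + 1) * (u + v) * n / 2))) = u + v := by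
    rw [Ec_slope_of_X_ne hX, Ec_negY, div_eq_iff hX']
    linear_combination (-(u + v) * n) * h
  rw [Affine.Point.some.injEq, Ec_addX, Ec_addY, hsl, hx, hyy]
  constructor
  · rw [hnd]; linear_combination (u ^ 2 + u * v + v ^ 2) * h
  · rw [hnd]; linear_combination (-(u + v) * (u ^ 2 + u * v + v ^ 2)) * h
end rot

section kummer
open Affine.Point
variable {F : Type*} [Field F] [CharZero F] [DecidableEq F] {c : F}

/-- The group `Kˣ` modulo cubes, additively. -/
def ModCubes (F : Type*) [Field F] : Type _ :=
  Additive (Fˣ ⧸ (powMonoidHom 3 : Fˣ →* Fˣ).range)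

noncomputable instance (F : Type*) [Field F] : AddCommGroup (ModCubes F) :=
  inferInstanceAs (AddCommGroup (Additive (Fˣ ⧸ (powMonoidHom 3 : Fˣ →* Fˣ).range)))

/-- The projection to the group modulo cubes. -/
def ModCubes.mk {F : Type*} [Field F] (a : Fˣ) : ModCubes F :=
  Additive.ofMul (QuotientGroup.mk a : Fˣ ⧸ (powMonoidHom 3 : Fˣ →* Fˣ).range)

lemma ModCubes.mk_mul {F : Type*} [Field F] (a b : Fˣ) :
    ModCubes.mk (a * b) = ModCubes.mk a + ModCubes.mk b := rfl

lemma ModCubes.mk_eq_zero {F : Type*} [Field F] {a : Fˣ} :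
    ModCubes.mk a = 0 ↔ ∃ u : Fˣ, u ^ 3 = a := by
  change (QuotientGroup.mk a : Fˣ ⧸ (powMonoidHom 3 : Fˣ →* Fˣ).range) = 1 ↔ _
  rw [QuotientGroup.eq_one_iff]
  rfl

/-- The class modulo cubes. -/
noncomputable def cls (a : F) : ModCubes F :=
  if h : a ≠ 0 then ModCubes.mk (Units.mk0 a h) else 0

lemma cls_mul {a b : F} (ha : a ≠ 0) (hb : b ≠ 0) : cls (a * b) = cls a + cls b := by
  rw [cls, cls, cls, dif_pos ha, dif_pos hb, dif_pos (mul_ne_zero ha hb), Units.mk0_mul,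
    ModCubes.mk_mul]

lemma cls_cube (a : F) : cls (a ^ 3) = 0 := by
  rw [cls]
  split_ifs with h
  · rw [ModCubes.mk_eq_zero]
    have ha : a ≠ 0 := by rintro rfl; simp at h
    exact ⟨Units.mk0 a ha, by ext; simp⟩
  · rfl

lemma cls_eq_zero {a : F} (ha : a ≠ 0) (h : cls a = 0) : ∃ u, a = u ^ 3 := by
  rw [cls, dif_pos ha, ModCubes.mk_eq_zero] at h
  obtain ⟨u, hu⟩ := h
  refine ⟨u, ?_⟩
  have := congrArg Units.val hu
  simpa using this.symm

lemma cls_neg {a : F} (ha : a ≠ 0) : cls (-a) = cls a := by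
  have : -a = (-1) ^ 3 * a := by ring
  rw [this, cls_mul (by simp) ha, cls_cube, zero_add]

/-- The Kummer map. -/
noncomputable def kumFun (c : F) : (Ec c).Point → ModCubes F
  | .zero => 0
  | .some _ y _ => if y = c then - cls (2 * c) else cls (y - c)

lemma kumFun_some {x y : F} (h : (Ec c).Nonsingular x y) :
    kumFun c (.some x y h) = if y = c then - cls (2 * c) else cls (y - c) := rfl

lemma kumFun_of_ne {x y : F} (h : (Ec c).Nonsingular x y) (hy : y ≠ c) :
    kumFun c (.some x y h) = cls (y - c) := by rw [kumFun_some, if_neg hy]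

lemma kumFun_of_ne_neg (hc : c ≠ 0) {x y : F} (h : (Ec c).Nonsingular x y) (hy : y ≠ -c) :
    kumFun c (.some x y h) = - cls (y + c) := by
  rw [kumFun_some]
  have hy2 : y + c ≠ 0 := fun h0 ↦ hy (eq_neg_of_add_eq_zero_left h0)
  split_ifs with h1
  · rw [h1, two_mul]
  · have h2 : y - c ≠ 0 := sub_ne_zero.mpr h1
    rw [eq_neg_iff_add_eq_zero, ← cls_mul h2 hy2]
    have : (y - c) * (y + c) = x ^ 3 := by linear_combination (Ec_nonsingular hc).mp h
    rw [this, cls_cube]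

lemma kumFun_neg (hc : c ≠ 0) (P : (Ec c).Point) : kumFun c (-P) = - kumFun c P := by
  match P with
  | 0 => exact (neg_zero (G := ModCubes F)).symm
  | .some x y h =>
    rw [neg_some]
    have h2c : 2 * c ≠ 0 := mul_ne_zero two_ne_zero hc
    by_cases hy : y = -c
    · have hyc : y ≠ c := by
        rintro rfl
        have : 2 * y = 0 := by linear_combination hy
        exact h2c this
      rw [kumFun_of_ne h hyc, kumFun_some, Ec_negY, if_pos (by rw [hy, neg_neg]), hy]
      rw [show -c - c = -(2 * c) by ring, cls_neg h2c]
    · rw [kumFun_of_ne_neg hc h hy, neg_neg, kumFun_of_ne _ (by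
        rw [Ec_negY]; exact fun h0 ↦ hy (by rw [← h0, neg_neg])), Ec_negY,
        show -y - c = -(y + c) by ring, cls_neg]
      exact fun h0 ↦ hy (eq_neg_of_add_eq_zero_left h0)

lemma kum_prod {x₁ x₂ y₁ y₂ l d : F} (hd : d ^ 2 = c ^ 2) (e₁ : y₁ ^ 2 = x₁ ^ 3 + c ^ 2)
    (r1 : y₁ - y₂ = l * (x₁ - x₂)) (r2 : x₁ ^ 2 + x₁ * x₂ + x₂ ^ 2 = l * (y₁ + y₂)) :
    (y₁ - d) * (y₂ - d) * ((l * (l ^ 2 - x₁ - x₂ - x₁) + y₁) - d) = (y₁ - l * x₁ - d) ^ 3 := by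
  obtain ⟨m, hm⟩ : ∃ m, y₁ = l * x₁ + m := ⟨y₁ - l * x₁, by ring⟩
  have hm2 : y₂ = l * x₂ + m := by linear_combination hm - r1
  subst hm hm2
  have s2 : x₁ * x₂ + (x₁ + x₂) * (l ^ 2 - x₁ - x₂) = - 2 * l * m := by linear_combination -r2
  have s3 : x₁ * x₂ * (l ^ 2 - x₁ - x₂) = m ^ 2 - c ^ 2 := by
    linear_combination (-1) * e₁ + x₁ * s2
  linear_combination l ^ 3 * s3 + l ^ 2 * (m - d) * s2 + l ^ 3 * hd

lemma kumFun_add (hc : c ≠ 0) (P Q : (Ec c).Point) :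
    kumFun c (P + Q) = kumFun c P + kumFun c Q := by
  match P, Q with
  | 0, Q => rw [zero_add]; exact (zero_add (kumFun c Q)).symm
  | .some x y h, 0 => rw [add_zero]; exact (add_zero (kumFun c _)).symm
  | .some x₁ y₁ h₁, .some x₂ y₂ h₂ =>
    have e₁ := (Ec_nonsingular hc).mp h₁
    have e₂ := (Ec_nonsingular hc).mp h₂
    by_cases hxy : x₁ = x₂ ∧ y₁ = (Ec c).negY x₂ y₂
    · have : Affine.Point.some x₁ y₁ h₁ = - Affine.Point.some x₂ y₂ h₂ := by
        rw [neg_some, Affine.Point.some.injEq]; exact hxy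
      rw [this, kumFun_neg hc, neg_add_cancel, neg_add_cancel]; rfl
    · obtain ⟨r1, r2⟩ := Ec_slope_rel hc e₁ e₂ hxy
      have hR : ∃ x₃ y₃, ∃ h₃ : (Ec c).Nonsingular x₃ y₃,
          Affine.Point.some x₁ y₁ h₁ + Affine.Point.some x₂ y₂ h₂ = - Affine.Point.some x₃ y₃ h₃ ∧
          y₃ = ((Ec c).slope x₁ x₂ y₁ y₂ * ((Ec c).slope x₁ x₂ y₁ y₂ ^ 2 - x₁ - x₂ - x₁) + y₁) := by
        have := add_some hxy (h₁ := h₁) (h₂ := h₂)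
        refine ⟨_, _, (Affine.nonsingular_neg ..).mpr (Affine.nonsingular_add h₁ h₂ hxy), ?_, ?_⟩
        · rw [this, ← neg_some, neg_neg]
        · rw [Ec_negY, Ec_addY, neg_neg]
      obtain ⟨x₃, y₃, h₃, hsum, hy₃⟩ := hR
      rw [hsum, kumFun_neg hc, neg_eq_iff_add_eq_zero]
      set l := (Ec c).slope x₁ x₂ y₁ y₂
      have p1 := kum_prod (d := c) rfl e₁ r1 r2
      have p2 := kum_prod (d := -c) (by ring) e₁ r1 r2
      rw [← hy₃] at p1 p2
      by_cases hp : (y₁ - c) * (y₂ - c) * (y₃ - c) = 0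
      · have hp' : (y₁ - -c) * (y₂ - -c) * (y₃ - -c) ≠ 0 := by
          intro h0
          rw [hp] at p1
          rw [h0] at p2
          have q1 := pow_eq_zero_iff (three_ne_zero) |>.mp p1.symm
          have q2 := pow_eq_zero_iff (three_ne_zero) |>.mp p2.symm
          have : 2 * c = 0 := by linear_combination q2 - q1
          exact hc (by simpa using this)
        simp only [mul_ne_zero_iff, sub_ne_zero] at hp'
        obtain ⟨⟨a1, a2⟩, a3⟩ := hp'
        rw [kumFun_of_ne_neg hc h₁ a1, kumFun_of_ne_neg hc h₂ a2, kumFun_of_ne_neg hc h₃ a3]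
        rw [← sub_ne_zero, sub_neg_eq_add] at a1 a2 a3
        have : cls (y₃ + c) + (cls (y₁ + c) + cls (y₂ + c)) = 0 := by
          rw [← cls_mul a1 a2, ← cls_mul a3 (mul_ne_zero a1 a2), mul_comm]
          simp only [sub_neg_eq_add] at p2
          rw [p2, cls_cube]
        rw [← neg_eq_zero, ← this]; abel
      · simp only [← ne_eq, mul_ne_zero_iff] at hp
        obtain ⟨⟨a1, a2⟩, a3⟩ := hp
        rw [kumFun_of_ne h₁ (sub_ne_zero.mp a1), kumFun_of_ne h₂ (sub_ne_zero.mp a2),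
          kumFun_of_ne h₃ (sub_ne_zero.mp a3), ← cls_mul a1 a2, ← cls_mul a3 (mul_ne_zero a1 a2),
          mul_comm, p1, cls_cube]

/-- The Kummer map as a homomorphism. -/
noncomputable def kum (hc : c ≠ 0) : (Ec c).Point →+ ModCubes F where
  toFun := kumFun c
  map_zero' := rfl
  map_add' := kumFun_add hc

lemma kum_apply (hc : c ≠ 0) (P : (Ec c).Point) : kum hc P = kumFun c P := rfl

lemma kum_ker (hc : c ≠ 0) (ω : F) (h : ω ^ 2 + ω + 1 = 0) (P : (Ec c).Point)
    (hP : kum hc P = 0) : ∃ Q, theta hc ω h Q = P := by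
  match P with
  | 0 => exact ⟨0, map_zero _⟩
  | .some x y hxy =>
    have e := (Ec_nonsingular hc).mp hxy
    rw [kum_apply, kumFun_some] at hP
    split_ifs at hP with hy
    · subst hy
      rw [neg_eq_zero] at hP
      obtain ⟨v, hv⟩ := cls_eq_zero (mul_ne_zero two_ne_zero hc) hP
      have hx : x = 0 := by simpa using e
      exact theta_surj hc ω h hxy (u := 0) (v := v) (by simp [hx]) (by simp) (by rw [← hv]; ring)
    · obtain ⟨u, hu⟩ := cls_eq_zero (sub_ne_zero.mpr hy) hP
      have hu0 : u ≠ 0 := by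
        rintro rfl
        exact hy (by simpa [sub_eq_zero] using hu)
      refine theta_surj hc ω h hxy (u := u) (v := x / u) (by field_simp) hu ?_
      rw [div_pow, ← hu, eq_div_iff (sub_ne_zero.mpr hy)]
      linear_combination e
end kummer


open WeierstrassCurve

section selmer
open IsDedekindDomain
variable {R : Type*} [CommRing R] [IsDedekindDomain R] {K : Type*} [Field K] [Algebra R K]
  [IsFractionRing R K]

open scoped WithZero in
lemma valMod_eq_one_iff (v : HeightOneSpectrum R) (a : Kˣ) :
    v.valuationOfNeZeroMod 3 (QuotientGroup.mk a : Kˣ ⧸ (powMonoidHom 3 : Kˣ →* Kˣ).range) = 1 ↔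
      ∃ t : ℤᵐ⁰, v.valuation K (a : K) = t ^ 3 := by
  have h1 : v.valuationOfNeZeroMod 3
      (QuotientGroup.mk a : Kˣ ⧸ (powMonoidHom 3 : Kˣ →* Kˣ).range) =
      Multiplicative.ofAdd (Int.quotientZMultiplesNatEquivZMod 3
        (QuotientAddGroup.mk (Multiplicative.toAdd (v.valuationOfNeZero a)))) := rfl
  rw [h1, ofAdd_eq_one, Int.quotientZMultiplesNatEquivZMod, ]
  rw [AddEquiv.map_eq_zero_iff, QuotientAddGroup.eq_zero_iff, Int.mem_zmultiples_iff]
  rw [← HeightOneSpectrum.valuationOfNeZero_eq]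
  constructor
  · rintro ⟨k, hk⟩
    refine ⟨((Multiplicative.ofAdd k : Multiplicative ℤ) : ℤᵐ⁰), ?_⟩
    rw [← WithZero.coe_pow, ← ofAdd_nsmul, WithZero.coe_inj]
    apply Multiplicative.toAdd.injective
    rw [hk]; simp [mul_comm]
  · rintro ⟨t, ht⟩
    have ht0 : t ≠ 0 := by
      rintro rfl
      simp at ht
    obtain ⟨t, rfl⟩ := WithZero.ne_zero_iff_exists.mp ht0
    rw [← WithZero.coe_pow, WithZero.coe_inj] at ht
    rw [ht]
    exact ⟨t.toAdd, by simp⟩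

open scoped WithZero in
lemma cube_of_val [IsPrincipalIdealRing R] (m : R) (hm : m ≠ 0)
    (h : ∀ v : HeightOneSpectrum R, ∃ t : ℤᵐ⁰, v.intValuation m = t ^ 3) :
    ∃ (u : Rˣ) (b : R), m = u * b ^ 3 := by
  classical
  have hI : Ideal.span {m} ≠ (⊥ : Ideal R) := by simpa using hm
  obtain ⟨s, hs⟩ := Multiset.exists_smul_of_dvd_count (k := 3)
    (UniqueFactorizationMonoid.normalizedFactors (Ideal.span {m})) (by
      intro P hP
      have hp := UniqueFactorizationMonoid.prime_of_normalized_factor P hP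
      have hp1 : P.IsPrime := Ideal.isPrime_of_prime hp
      let v : HeightOneSpectrum R := ⟨P, hp1, hp.ne_zero⟩
      obtain ⟨t, ht⟩ := h v
      rw [HeightOneSpectrum.intValuation_if_neg _ hm,
        Ideal.count_associates_factors_eq hI hp1 hp.ne_zero] at ht
      have ht0 : t ≠ 0 := by
        rintro rfl
        simp at ht
      obtain ⟨k, rfl⟩ : ∃ k : ℤ, t = WithZero.exp k := ⟨_, (WithZero.exp_log ht0).symm⟩
      rw [← WithZero.exp_nsmul, WithZero.exp_inj] at ht
      zify
      exact ⟨-k, by simp at ht; linarith⟩)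
  have h2 := Ideal.prod_normalizedFactors_eq_self hI
  rw [hs, Multiset.prod_nsmul] at h2
  obtain ⟨b, hb⟩ := (IsPrincipalIdealRing.principal s.prod).principal
  rw [hb, Ideal.submodule_span_eq, Ideal.span_singleton_pow, Ideal.span_singleton_eq_span_singleton] at h2
  obtain ⟨u, hu⟩ := h2
  exact ⟨u, b, by rw [← hu, mul_comm]⟩

lemma fromUnit_surj [IsPrincipalIdealRing R] :
    Function.Surjective (selmerGroup.fromUnit (R := R) (K := K) (n := 3)) := by
  rintro ⟨x, hx⟩
  obtain ⟨a, rfl⟩ := QuotientGroup.mk_surjective x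
  obtain ⟨n, d, hd, hnd⟩ := IsFractionRing.div_surjective (A := R) (a : K)
  have hd0 : d ≠ 0 := nonZeroDivisors.ne_zero hd
  have hd0' : algebraMap R K d ≠ 0 := by simpa using hd0
  have hn0 : n ≠ 0 := by
    rintro rfl
    exact a.ne_zero (by rw [← hnd]; simp)
  obtain ⟨u, b, hub⟩ := cube_of_val (n * d ^ 2) (by positivity) (by
    intro v
    obtain ⟨t, ht⟩ := (valMod_eq_one_iff v a).mp (hx v (Set.notMem_empty v))
    refine ⟨t * v.intValuation d, ?_⟩
    rw [← HeightOneSpectrum.valuation_of_algebraMap (K := K),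
      ← HeightOneSpectrum.valuation_of_algebraMap (K := K), mul_pow, ← ht, ← map_pow, ← map_mul,
      ← hnd]
    congr 1
    simp only [map_mul, map_pow]
    field_simp)
  have hb0 : b ≠ 0 := by
    rintro rfl
    have : n * d ^ 2 ≠ 0 := by positivity
    simp_all
  have hb0' : algebraMap R K b ≠ 0 := by simpa using hb0
  refine ⟨u, Subtype.ext ?_⟩
  change QuotientGroup.mk _ = QuotientGroup.mk _
  rw [QuotientGroup.eq]
  refine ⟨Units.mk0 (algebraMap R K b / algebraMap R K d) (div_ne_zero hb0' hd0'), ?_⟩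
  rw [eq_inv_mul_iff_mul_eq]
  ext
  have := congrArg (algebraMap R K) hub
  simp only [map_mul, map_pow] at this
  simp [← hnd]
  field_simp
  linear_combination -this

lemma selmer_card [IsPrincipalIdealRing R] [Finite Rˣ] (hR : Nat.card Rˣ ≤ 9)
    (S : Set (HeightOneSpectrum R)) (hS : S.Finite) :
    Finite (selmerGroup (K := K) (S := S) (n := 3)) ∧
    Nat.card (selmerGroup (K := K) (S := S) (n := 3)) ≤ 3 ^ (S.ncard + 2) := by
  have := hS.to_subtype
  have hfin0 : Finite (selmerGroup (R := R) (K := K) (S := ∅) (n := 3)) :=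
    Finite.of_surjective _ fromUnit_surj
  have h0 : Nat.card (selmerGroup (R := R) (K := K) (S := ∅) (n := 3)) ≤ 9 :=
    (Nat.card_le_card_of_surjective _ fromUnit_surj).trans hR
  have hk := Subgroup.card_mul_index
    (selmerGroup.valuation (R := R) (K := K) (S := S) (n := 3)).ker
  have hZ : Finite (S → Multiplicative (ZMod 3)) := inferInstance
  have hZc : Nat.card (S → Multiplicative (ZMod 3)) = 3 ^ S.ncard := by
    rw [Nat.card_fun, Nat.card_coe_set_eq]
    congr 1
    simp [Nat.card_eq_fintype_card]
  have hi : (selmerGroup.valuation (R := R) (K := K) (S := S) (n := 3)).ker.index ≤ 3 ^ S.ncard := by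
    rw [Subgroup.index_ker, ← hZc]
    exact Nat.card_le_card_of_injective _ Subtype.val_injective
  have hi0 : (selmerGroup.valuation (R := R) (K := K) (S := S) (n := 3)).ker.index ≠ 0 := by
    rw [Subgroup.index_ker]
    exact Nat.card_pos.ne'
  let f : (selmerGroup.valuation (R := R) (K := K) (S := S) (n := 3)).ker →
      selmerGroup (R := R) (K := K) (S := ∅) (n := 3) := fun x ↦ ⟨x.1.1,
        (SetLike.ext_iff.mp selmerGroup.valuation_ker_eq x.1).mp x.2⟩
  have hf : Function.Injective f := by
    intro x y hxy
    exact Subtype.ext (Subtype.ext (Subtype.mk.inj hxy))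
  have hfk : Finite (selmerGroup.valuation (R := R) (K := K) (S := S) (n := 3)).ker :=
    Finite.of_injective f hf
  have hck := (Nat.card_le_card_of_injective f hf).trans h0
  have hck0 : Nat.card (selmerGroup.valuation (R := R) (K := K) (S := S) (n := 3)).ker ≠ 0 :=
    Nat.card_pos.ne'
  constructor
  · apply Nat.finite_of_card_ne_zero
    rw [← hk]
    exact mul_ne_zero hck0 hi0
  · rw [← hk, pow_add, mul_comm]
    exact Nat.mul_le_mul hi hck
end selmer

section image
open IsDedekindDomain
open Affine.Point
variable {R : Type*} [CommRing R] [IsDedekindDomain R] {K : Type*} [Field K] [Algebra R K]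
  [IsFractionRing R K] [CharZero K] [DecidableEq K] {c : K}

/-- A class is a cube locally at a valuation. -/
def LocCube {Γ : Type*} [LinearOrderedCommGroupWithZero Γ] (v : Valuation K Γ) (a : K) : Prop :=
  ∃ t : Γ, v a = t ^ 3

lemma loc_cube {Γ : Type*} [LinearOrderedCommGroupWithZero Γ] (v : Valuation K Γ)
    (hv : v (2 * c) = 1) {x y : K} (e : y ^ 2 = x ^ 3 + c ^ 2) (hy : y ≠ c) :
    LocCube v (y - c) := by
  have hp : (y - c) * (y + c) = x ^ 3 := by linear_combination e
  have hvp : v (y - c) * v (y + c) = v x ^ 3 := by rw [← map_mul, hp, map_pow]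
  have hyc : v (y - c) ≠ 0 := by simpa [sub_eq_zero] using hy
  by_cases h1 : v (y + c) = 1
  · exact ⟨v x, by rw [← hvp, h1, mul_one]⟩
  by_cases h2 : v (y - c) = 1
  · exact ⟨1, by rw [h2, one_pow]⟩
  have hsum : y + c = (y - c) + 2 * c := by ring
  by_cases h3 : v (y - c) < 1
  · exfalso
    apply h1
    rw [hsum, v.map_add_eq_of_lt_right (by rwa [hv]), hv]
  · have h4 : 1 < v (y - c) := lt_of_le_of_ne (not_lt.mp h3) (Ne.symm h2)
    have h5 : v (y + c) = v (y - c) := by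
      rw [hsum, v.map_add_eq_of_lt_left (by rwa [hv])]
    rw [h5] at hvp
    have hx0 : v x ≠ 0 := by
      intro h0
      rw [h0] at hvp
      simp [hyc] at hvp
    refine ⟨v (y - c) / v x, ?_⟩
    rw [div_pow, ← hvp, pow_succ, pow_two, mul_div_cancel_left₀ _ (mul_ne_zero hyc hyc)]

lemma kum_mem (hc : c ≠ 0) (S : Set (HeightOneSpectrum R))
    (hS : ∀ v ∉ S, v.valuation K (2 * c) = 1) (P : (Ec c).Point) :
    ∃ g : selmerGroup (R := R) (K := K) (S := S) (n := 3), kum hc P = Additive.ofMul g.1 := by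
  match P with
  | 0 => exact ⟨1, rfl⟩
  | .some x y hxy =>
    have e := (Ec_nonsingular hc).mp hxy
    rw [kum_apply, kumFun_some]
    split_ifs with hy
    · rw [cls, dif_pos (mul_ne_zero two_ne_zero hc)]
      refine ⟨⟨QuotientGroup.mk (Units.mk0 (2 * c) (mul_ne_zero two_ne_zero hc)), ?_⟩⁻¹, rfl⟩
      intro v hv
      exact (valMod_eq_one_iff v _).mpr ⟨1, by rw [one_pow]; exact hS v hv⟩
    · rw [cls, dif_pos (sub_ne_zero.mpr hy)]
      refine ⟨⟨QuotientGroup.mk (Units.mk0 (y - c) (sub_ne_zero.mpr hy)), ?_⟩, rfl⟩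
      intro v hv
      exact (valMod_eq_one_iff v _).mpr (loc_cube _ (hS v hv) e hy)

lemma kum_range [IsPrincipalIdealRing R] [Finite Rˣ] (hR : Nat.card Rˣ ≤ 9)
    (hc : c ≠ 0) (S : Set (HeightOneSpectrum R)) (hSf : S.Finite)
    (hS : ∀ v ∉ S, v.valuation K (2 * c) = 1) :
    (Set.range (kum hc)).Finite ∧ (Set.range (kum hc)).ncard ≤ 3 ^ (S.ncard + 2) := by
  obtain ⟨h1, h2⟩ := selmer_card (K := K) hR S hSf
  let f : selmerGroup (R := R) (K := K) (S := S) (n := 3) → ModCubes K :=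
    fun g ↦ Additive.ofMul g.1
  have hsub : Set.range (kum hc) ⊆ Set.range f := by
    rintro _ ⟨P, rfl⟩
    obtain ⟨g, hg⟩ := kum_mem hc S hS P
    exact ⟨g, hg.symm⟩
  have hfin : (Set.range f).Finite := Set.finite_range f
  refine ⟨hfin.subset hsub, (Set.ncard_le_ncard hsub hfin).trans ?_⟩
  rw [← Nat.card_coe_set_eq]
  exact (Finite.card_range_le f).trans h2
end image


open WeierstrassCurve

section final
open IsDedekindDomain NumberField

lemma ncard_primes {K : Type*} [Field K] [NumberField K] [IsCyclotomicExtension {3} ℚ K] (p : ℕ)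
    (hp : p.Prime) :
    {v : HeightOneSpectrum (𝓞 K) | (p : 𝓞 K) ∈ v.asIdeal}.Finite ∧
    {v : HeightOneSpectrum (𝓞 K) | (p : 𝓞 K) ∈ v.asIdeal}.ncard ≤ 2 := by
  have hprime : Prime (p : ℤ) := Nat.prime_iff_prime_int.mp hp
  have hmax : (Ideal.span {(p:ℤ)}).IsMaximal :=
    PrincipalIdealRing.isMaximal_of_irreducible hprime.irreducible
  have hgal : IsGalois ℚ K := IsCyclotomicExtension.isGalois {3} ℚ K
  have h1 := Ideal.ncard_primesOver_mul_ramificationIdxIn_mul_inertiaDegIn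
    (Ideal.span {(p:ℤ)}) (𝓞 K) (Gal(K/ℚ))
  have h2 : Nat.card (Gal(K/ℚ)) = 2 := by
    rw [IsGalois.card_aut_eq_finrank, IsCyclotomicExtension.finrank (n := 3) K
      (Polynomial.cyclotomic.irreducible_rat (by simp))]
    rfl
  rw [h2] at h1
  have h3 : ((Ideal.span {(p:ℤ)}).primesOver (𝓞 K)).ncard ≤ 2 :=
    Nat.le_of_dvd two_pos (Dvd.intro _ h1)
  have hfin : ((Ideal.span {(p:ℤ)}).primesOver (𝓞 K)).Finite :=
    Set.finite_of_ncard_ne_zero (by intro h0; rw [h0] at h1; simp at h1)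
  have hinj : Function.Injective (HeightOneSpectrum.asIdeal (R := 𝓞 K)) :=
    fun v w h ↦ HeightOneSpectrum.ext h
  have hmaps : ∀ v ∈ {v : HeightOneSpectrum (𝓞 K) | (p : 𝓞 K) ∈ v.asIdeal},
      v.asIdeal ∈ (Ideal.span {(p:ℤ)}).primesOver (𝓞 K) := by
    intro v hv
    refine ⟨v.isPrime, ⟨?_⟩⟩
    refine hmax.eq_of_le (Ideal.IsPrime.under ℤ v.asIdeal).ne_top ?_
    rw [Ideal.span_singleton_le_iff_mem, Ideal.mem_comap]
    simpa using hv
  refine ⟨Set.Finite.of_injOn hmaps hinj.injOn hfin, ?_⟩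
  exact (Set.ncard_le_ncard_of_injOn _ hmaps hinj.injOn hfin).trans h3

lemma units_card {K : Type*} [Field K] [NumberField K] [IsCyclotomicExtension {3} ℚ K] :
    Finite (𝓞 K)ˣ ∧ Nat.card (𝓞 K)ˣ ≤ 9 := by
  classical
  have hζ := IsCyclotomicExtension.zeta_spec 3 ℚ K
  have hm := IsCyclotomicExtension.Rat.Three.Units.mem hζ
  generalize hl : ([1, -1, _, _, _, _] : List (𝓞 K)ˣ) = l at hm
  have hlen : l.length ≤ 9 := by rw [← hl]; simp
  have hs : (Set.univ : Set (𝓞 K)ˣ) ⊆ (l.toFinset : Set (𝓞 K)ˣ) := by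
    intro u _
    simpa using hm u
  have hf : Finite (𝓞 K)ˣ := Set.finite_univ_iff.mp ((Finset.finite_toSet _).subset hs)
  refine ⟨hf, ?_⟩
  rw [← Set.ncard_univ]
  refine (Set.ncard_le_ncard hs (Finset.finite_toSet _)).trans ?_
  rw [Set.ncard_coe_finset]
  exact (List.toFinset_card_le l).trans hlen

lemma bad_primes {K : Type*} [Field K] [NumberField K] [IsCyclotomicExtension {3} ℚ K] (M : ℕ)
    (hM : M ≠ 0) :
    {v : HeightOneSpectrum (𝓞 K) | ((12 * M ^ 2 : ℕ) : 𝓞 K) ∈ v.asIdeal}.Finite ∧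
    {v : HeightOneSpectrum (𝓞 K) | ((12 * M ^ 2 : ℕ) : 𝓞 K) ∈ v.asIdeal}.ncard ≤
      2 * (M.primeFactors.card + 2) := by
  classical
  set T : Finset ℕ := insert 2 (insert 3 M.primeFactors) with hT
  have hTp : ∀ p ∈ T, p.Prime := by
    intro p hp
    simp only [hT, Finset.mem_insert] at hp
    rcases hp with rfl | rfl | hp
    · exact Nat.prime_two
    · exact Nat.prime_three
    · exact Nat.prime_of_mem_primeFactors hp
  have hTc : T.card ≤ M.primeFactors.card + 2 :=
    (Finset.card_insert_le _ _).trans (Nat.succ_le_succ (Finset.card_insert_le _ _))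
  have hsub : {v : HeightOneSpectrum (𝓞 K) | ((12 * M ^ 2 : ℕ) : 𝓞 K) ∈ v.asIdeal} ⊆
      ⋃ p ∈ T, {v : HeightOneSpectrum (𝓞 K) | (p : 𝓞 K) ∈ v.asIdeal} := by
    intro v hv
    have hpr := v.isPrime
    simp only [Set.mem_iUnion, Set.mem_ofPred_eq, exists_prop]
    simp only [Set.mem_ofPred_eq, Nat.cast_mul, Nat.cast_pow] at hv
    rcases hpr.mem_or_mem hv with h | h
    · rw [show ((12 : ℕ) : 𝓞 K) = ((2 : ℕ) : 𝓞 K) ^ 2 * ((3 : ℕ) : 𝓞 K) by push_cast; norm_num] at h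
      rcases hpr.mem_or_mem h with h | h
      · exact ⟨2, by simp [hT], hpr.mem_of_pow_mem _ h⟩
      · exact ⟨3, by simp [hT], h⟩
    · have h := hpr.mem_of_pow_mem _ h
      rw [← Nat.prod_primeFactorsList hM, Nat.cast_list_prod] at h
      rw [← Multiset.prod_coe, hpr.multiset_prod_mem_iff_exists_mem] at h
      obtain ⟨q, hq, hqv⟩ := h
      simp only [Multiset.mem_coe, List.mem_map] at hq
      obtain ⟨p, hp, rfl⟩ := hq
      exact ⟨p, by simp [hT, Nat.mem_primeFactorsList hM |>.mp hp, hM], hqv⟩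
  have hfin : (⋃ p ∈ T, {v : HeightOneSpectrum (𝓞 K) | (p : 𝓞 K) ∈ v.asIdeal}).Finite :=
    T.finite_toSet.biUnion fun p hp ↦ (ncard_primes p (hTp p hp)).1
  refine ⟨hfin.subset hsub, (Set.ncard_le_ncard hsub hfin).trans ?_⟩
  refine (Finset.set_ncard_biUnion_le T _).trans ?_
  refine (Finset.sum_le_card_nsmul T _ 2 fun p hp ↦ (ncard_primes p (hTp p hp)).2).trans ?_
  rw [smul_eq_mul, mul_comm]
  exact Nat.mul_le_mul_left 2 hTc

lemma rank_K {K : Type*} [Field K] [NumberField K] [IsCyclotomicExtension {3} ℚ K] [DecidableEq K]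
    (M : ℕ) (hM : M ≠ 0) {ω : K} (hω : ω ^ 2 + ω + 1 = 0) (c : K) (hcd : c = M * (2 * ω + 1)) :
    Module.Finite ℤ (Ec c).Point ∧
      Module.finrank ℤ (Ec c).Point ≤ 4 * M.primeFactors.card + 12 := by
  have hc2 : (2 * c) ^ 2 = -(12 * M ^ 2) := by
    rw [hcd]; linear_combination (16 * M ^ 2 : K) * hω
  have hMK : (M : K) ≠ 0 := by exact_mod_cast hM
  have hc : c ≠ 0 := by
    rintro rfl
    have : (12 * M ^ 2 : K) ≠ 0 := mul_ne_zero (by norm_num) (pow_ne_zero _ hMK)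
    apply this
    linear_combination hc2
  obtain ⟨hS, hSc⟩ := bad_primes (K := K) M hM
  set S := {v : HeightOneSpectrum (𝓞 K) | ((12 * M ^ 2 : ℕ) : 𝓞 K) ∈ v.asIdeal} with hSd
  have hpid := IsCyclotomicExtension.Rat.three_pid K
  obtain ⟨hu, huc⟩ := units_card (K := K)
  obtain ⟨k1, k2⟩ := kum_range (R := 𝓞 K) huc hc S hS (by
    intro v hv
    have h1 : v.valuation K (((12 * M ^ 2 : ℕ) : 𝓞 K) : K) = 1 := by
      refine le_antisymm (v.valuation_le_one _) (not_lt.mp fun h ↦ hv ?_)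
      exact (v.valuation_lt_one_iff_mem _).mp h
    have h2 : v.valuation K (2 * c) ^ 2 = 1 := by
      rw [← map_pow, hc2, Valuation.map_neg, ← h1]
      congr 1
      change _ = algebraMap (𝓞 K) K _
      rw [map_natCast]
      push_cast
      rfl
    exact (pow_eq_one_iff_of_nonneg zero_le two_ne_zero).mp h2)
  obtain ⟨i1, i2⟩ := index_bound (theta hc ω hω) (theta_theta hc ω hω) (kum hc)
    (kum_ker hc ω hω) _ k1 k2
  have hfi : (nsmulAddMonoidHom (α := (Ec c).Point) 3).range.FiniteIndex := ⟨i1⟩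
  have hfg : AddGroup.FG (Ec c).Point := fg_of_finiteIndex hc hfi
  refine ⟨Module.Finite.iff_addGroup_fg.mpr hfg, ?_⟩
  refine (finrank_le_of_index i1 (m := 2 * (S.ncard + 2)) ?_).trans ?_
  · rwa [← pow_mul, mul_comm] at i2
  · omega

lemma point_inj {F : Type*} [Field F] [DecidableEq F] {W V : Affine F} (h : W = V) :
    ∃ f : W.Point →+ V.Point, Function.Injective f := by
  subst h
  exact ⟨AddMonoidHom.id _, fun _ _ h ↦ h⟩

lemma rank_Q_aux (K : Type) [Field K] [NumberField K] [IsCyclotomicExtension {3} ℚ K] (M : ℕ) (hM : M ≠ 0) :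
    Module.rank ℤ (EM M).Point < Cardinal.aleph0 ∧
      Module.finrank ℤ (EM M).Point ≤ 4 * M.primeFactors.card + 12 := by
  classical
  have hζ := IsCyclotomicExtension.zeta_spec 3 ℚ K
  set ω : K := IsCyclotomicExtension.zeta 3 ℚ K
  have hω : ω ^ 2 + ω + 1 = 0 := by
    simpa using hζ.isRoot_cyclotomic (by decide)
  set c : K := M * (2 * ω + 1) with hcd
  obtain ⟨hfin, hr⟩ := rank_K M hM hω c hcd
  obtain ⟨f₁, hf₁⟩ := point_inj (W := EM M) (V := ((EM M).baseChange ℚ)) (by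
    simp [WeierstrassCurve.baseChange])
  obtain ⟨f₂, hf₂⟩ := point_inj (W := ((EM M).baseChange K)) (V := Ec c) (by
    ext
    · simp [EM, Ec]
    · simp [EM, Ec]
    · simp [EM, Ec]
    · simp [EM, Ec]
    · simp [EM, Ec, hcd]
      linear_combination (-4 * M ^ 2 : K) * hω)
  let g : (EM M).Point →+ (Ec c).Point :=
    f₂.comp ((Affine.Point.map (W' := EM M) (Algebra.ofId ℚ K)).comp f₁)
  have hg : Function.Injective g :=
    hf₂.comp ((Affine.Point.map_injective _).comp hf₁)
  have hg' : Function.Injective g.toIntLinearMap := hg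
  have : Module.Finite ℤ (EM M).Point := Module.Finite.of_injective _ hg'
  exact ⟨Module.rank_lt_aleph0 ℤ _, (LinearMap.finrank_le_finrank_of_injective hg').trans hr⟩

lemma rank_Q (M : ℕ) (hM : M ≠ 0) :
    Module.rank ℤ (EM M).Point < Cardinal.aleph0 ∧
      Module.finrank ℤ (EM M).Point ≤ 4 * M.primeFactors.card + 12 :=
  have : IsCyclotomicExtension {3} ℚ (CyclotomicField 3 ℚ) := by
    have h := CyclotomicField.isCyclotomicExtension 3 ℚ
    convert h
    · rfl
    · exact Subsingleton.elim _ _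
  rank_Q_aux (CyclotomicField 3 ℚ) M hM
end final


section omega

lemma factorial_le_prod (s : Finset ℕ) (hs : ∀ p ∈ s, 2 ≤ p) : (s.card + 1).factorial ≤ ∏ p ∈ s, p := by
  induction s using Finset.induction_on_max with
  | empty => simp
  | insert a s hlt ih =>
    have ha : a ∉ s := fun h ↦ lt_irrefl _ (hlt a h)
    rw [Finset.prod_insert ha, Finset.card_insert_of_notMem ha, Nat.factorial_succ]
    refine Nat.mul_le_mul ?_ (ih fun p hp ↦ hs p (Finset.mem_insert_of_mem hp))
    have hsub : s ⊆ Finset.Ico 2 a := fun p hp ↦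
      Finset.mem_Ico.mpr ⟨hs p (Finset.mem_insert_of_mem hp), hlt p hp⟩
    have := Finset.card_le_card hsub
    have h2 := hs a (Finset.mem_insert_self a s)
    rw [Nat.card_Ico] at this
    omega

lemma one_lt_log (M : ℕ) (hM : 0 < M) : 1 < Real.log (3 * M) := by
  rw [Real.lt_log_iff_exp_lt (by positivity)]
  have h1 := Real.exp_one_lt_d9
  have h2 : (1 : ℝ) ≤ M := by exact_mod_cast hM
  linarith

lemma omega_bound (M : ℕ) (hM : 0 < M) :
    ((M.primeFactors.card : ℝ) + 1) ≤ 12 * Real.log (3 * M) / Real.log (Real.log (3 * M)) := by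
  have hL := one_lt_log M hM
  have hLL : 0 < Real.log (Real.log (3 * M)) := Real.log_pos hL
  rw [le_div_iff₀ hLL]
  have hfac : (M.primeFactors.card + 1).factorial ≤ M :=
    (factorial_le_prod _ fun p hp ↦ (Nat.prime_of_mem_primeFactors hp).two_le).trans
      (Nat.le_of_dvd hM (Nat.prod_primeFactors_dvd M))
  set n := M.primeFactors.card + 1 with hn
  have hn1 : (1 : ℝ) ≤ n := by rw [hn]; push_cast; linarith [Nat.cast_nonneg (α := ℝ) M.primeFactors.card]
  have hnc : ((M.primeFactors.card : ℝ) + 1) = n := by rw [hn]; push_cast; rfl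
  rw [hnc]
  set L := Real.log (3 * M) with hLd
  have hlogfac : Real.log (n.factorial) ≤ L := by
    apply Real.log_le_log (by exact_mod_cast Nat.factorial_pos n)
    have : (n.factorial : ℝ) ≤ M := by exact_mod_cast hfac
    have : (0 : ℝ) ≤ M := by positivity
    linarith
  have hfpos : (0 : ℝ) < n.factorial := by exact_mod_cast Nat.factorial_pos n
  have h1 : n * Real.log n ≤ Real.log n.factorial + n := by
    have := Real.pow_div_factorial_le_exp (n : ℝ) (by positivity) n
    have := Real.log_le_log (by positivity) this
    rw [Real.log_exp, Real.log_div (by positivity) (by positivity), Real.log_pow] at this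
    linarith
  have h2 : (n : ℝ) * Real.log 2 ≤ Real.log n.factorial + Real.log 2 := by
    have h : 2 ^ n ≤ n.factorial * 2 := by
      rw [hn, pow_succ]
      refine Nat.mul_le_mul_right 2 ?_
      have := Nat.factorial_mul_pow_le_factorial (m := 1) (n := M.primeFactors.card)
      rwa [Nat.factorial_one, one_mul, one_add_one_eq_two, add_comm 1] at this
    have h' : (2 : ℝ) ^ n ≤ n.factorial * 2 := by exact_mod_cast h
    have := Real.log_le_log (by positivity) h'
    rwa [Real.log_pow, Real.log_mul (by positivity) (by positivity)] at this
  have hl2 := Real.log_two_gt_d9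
  have h3 : (n : ℝ) ≤ 3 * L := by nlinarith
  by_cases hcase : (n : ℝ) ^ 2 ≤ L
  · have hs : (n : ℝ) ≤ √L := Real.le_sqrt_of_sq_le hcase
    have h5 : Real.log L ≤ 2 * √L := by
      have h6 := Real.log_le_self (Real.sqrt_nonneg L)
      rw [Real.log_sqrt (by linarith)] at h6
      linarith
    have h7 := Real.mul_self_sqrt (show 0 ≤ L by linarith)
    nlinarith [Real.sqrt_nonneg L]
  · have h5 : Real.log L ≤ 2 * Real.log n := by
      have := Real.log_le_log (by linarith) (not_le.mp hcase).le
      rwa [Real.log_pow] at this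
    nlinarith
end omega

/-- There is an absolute constant `C` such that for every cube-free positive integer `M`, the
Mordell–Weil group `E_M(ℚ)` of `E_M : Y² = X³ - 3M²` has finite rank `r(M)` with
`r(M) ≤ C(ω(M) + 1)`, and moreover `ω(M) + 1 ≤ C log(3M)/log log(3M)`; in particular
`r(M) ≤ C² log(3M)/log log(3M)`. Here `ω(M)` is the number of distinct prime factors of `M`. -/
theorem rank_EM_bound :
    ∃ C : ℝ, 0 < C ∧ ∀ M : ℕ, 0 < M → (∀ p : ℕ, p.Prime → ¬ p ^ 3 ∣ M) →
      Module.rank ℤ (EM M).Point < Cardinal.aleph0 ∧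
      (Module.finrank ℤ (EM M).Point : ℝ) ≤ C * (M.primeFactors.card + 1) ∧
      ((M.primeFactors.card : ℝ) + 1) ≤ C * Real.log (3 * M) / Real.log (Real.log (3 * M)) ∧
      (Module.finrank ℤ (EM M).Point : ℝ) ≤
        C ^ 2 * Real.log (3 * M) / Real.log (Real.log (3 * M)) := by
  refine ⟨12, by norm_num, fun M hM _ ↦ ?_⟩
  obtain ⟨h1, h2⟩ := rank_Q M hM.ne'
  have h3 := omega_bound M hM
  have h4 : (Module.finrank ℤ (EM M).Point : ℝ) ≤ 12 * (M.primeFactors.card + 1) := by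
    have : (Module.finrank ℤ (EM M).Point : ℝ) ≤ 4 * M.primeFactors.card + 12 := by
      exact_mod_cast h2
    linarith [Nat.cast_nonneg (α := ℝ) M.primeFactors.card]
  refine ⟨h1, h4, h3, h4.trans ?_⟩
  have h5 : (12 : ℝ) ^ 2 * Real.log (3 * M) / Real.log (Real.log (3 * M)) =
      12 * (12 * Real.log (3 * M) / Real.log (Real.log (3 * M))) := by ring
  rw [h5]
  linarith
end
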